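/- arXiv:0906.2296 — 9 statements merged into one kernel-verified Lean document; each statement's English description precedes it below -/
import Mathlib

section
/- Let n ≥ 3, μ > 0, and M be a positive integer. There exist real constants α_{j,k} (0 ≤ j ≤ k ≤ M+1) with α_{k,k} = 1, and real constants β_{l,m,k} (1 ≤ k ≤ M+1, 1 ≤ l ≤ k, m = (m₁,…,m_l) ∈ (ℕ∪{0})^l with |m| := m₁+⋯+m_l ≤ k−l) such that the following holds: for every A₀ ∈ C^M((0,∞); ℂ) for which m₀(r) := ∫₀^r |A₀(s)|² s^{n−1} ds is finite for all r > 0, setting ρ₀ := |A₀|² and v₀(r) := √(2μ m₀(r)/((n−2) r^{n−2})), at every r > 0 with v₀(r) > 0 the function v₀ is (M+1)-times differentiable and for every k ∈ {1,…,M+1} one has Σ_{j=0}^k α_{j,k} r^j v₀^{(j)}(r) = Σ_{l=1}^k Σ_{m ∈ (ℕ∪{0})^l, |m| ≤ k−l} β_{l,m,k} · (∏_{i=1}^l ρ₀^{(m_i)}(r)) · r^{2l+|m|} / v₀(r)^{2l−1}. -/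
open MeasureTheory Set

/-!
The mass satisfies `m₀' = ρ₀ r^(n-1)`, so differentiating `v₀² = 2μ m₀ / ((n-2) r^(n-2))` removes
the nonlocal term and leaves the first-order equation `r v' + a v = b ρ r² / v` with
`a = (n-2)/2` and `b = μ/(n-2)`. This is the case `k = 1`. The operator `r d/dr` sends the product
attached to `(l, m)` to a combination of products attached to `(l, m + eᵢ)`, `(l, m)` and, through
`v'`, `(l + 1, (0, m))`; all of them are admissible at level `k + 1` when `(l, m)` is admissible at
level `k`. Since `r d/dr - k` takes `r^(k+1) v^(k+1) + (a+k) r^k v^(k)` to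
`r^(k+2) v^(k+2) + (a+k+1) r^(k+1) v^(k+1)`, an induction on `k` proves the identity with a
left-hand side consisting of its two leading terms only.
-/

lemma hasDerivAt_iteratedDeriv {𝕜 E : Type*} [NontriviallyNormedField 𝕜] [NormedAddCommGroup E]
    [NormedSpace 𝕜 E] {f : 𝕜 → E} {N : WithTop ℕ∞} {j : ℕ} {x : 𝕜} (hf : ContDiffAt 𝕜 N f x)
    (hj : j < N) : HasDerivAt (iteratedDeriv j f) (iteratedDeriv (j + 1) f x) x := by
  have hdiff : DifferentiableWithinAt 𝕜 (iteratedDerivWithin j f univ) univ x :=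
    hf.contDiffWithinAt.differentiableWithinAt_iteratedDerivWithin hj
      (by simp)
  rw [iteratedDerivWithin_univ, differentiableWithinAt_univ] at hdiff
  simpa only [iteratedDeriv_succ] using hdiff.hasDerivAt

lemma natCast_mul_pow_sub_one {K : Type*} [Field K] (k : ℕ) {x : K} (hx : x ≠ 0) :
    (k : K) * x ^ (k - 1) = k * x ^ k / x := by
  rcases k with _ | k
  · simp
  · rw [Nat.add_sub_cancel, pow_succ, mul_div_assoc, mul_div_cancel_right₀ _ hx]

section RaisedIndex

variable {ι : Type*} [Fintype ι] [DecidableEq ι]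

lemma sum_update_add_one (m : ι → ℕ) (i : ι) :
    ∑ j, Function.update m i (m i + 1) j = ∑ j, m j + 1 := by
  rw [Finset.sum_update_of_mem (Finset.mem_univ i), Finset.sdiff_singleton_eq_erase,
    ← Finset.add_sum_erase _ m (Finset.mem_univ i)]
  ring

lemma hasDerivAt_prod_iteratedDeriv {𝕜 : Type*} [NontriviallyNormedField 𝕜] {f : 𝕜 → 𝕜}
    {N : WithTop ℕ∞} {x : 𝕜} (hf : ContDiffAt 𝕜 N f x) (m : ι → ℕ) (hm : ∀ i, m i < N) :
    HasDerivAt (fun y => ∏ i, iteratedDeriv (m i) f y)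
      (∑ i, ∏ j, iteratedDeriv (Function.update m i (m i + 1) j) f x) x := by
  refine (HasDerivAt.fun_finsetProd fun i _ => hasDerivAt_iteratedDeriv hf (hm i)).congr_deriv
    (Finset.sum_congr rfl fun i _ => ?_)
  rw [smul_eq_mul, ← Finset.prod_erase_mul _ _ (Finset.mem_univ i), Function.update_self]
  congr 1
  exact Finset.prod_congr rfl fun j hj => by
    rw [Function.update_of_ne (Finset.ne_of_mem_erase hj)]

end RaisedIndex

/-- A real quantity depending on a density `ρ`, a velocity `v` and a radius `r`. Linear
combinations of such functionals have coefficients that do not depend on `ρ` and `v`. -/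
abbrev RadialFunctional : Type := (ℝ → ℝ) → (ℝ → ℝ) → ℝ → ℝ

/-- The product `(∏ᵢ ρ^(mᵢ)(r)) r^(2l+|m|) / v(r)^(2l-1)` attached to a multi-index of length `l`.
The subtraction is truncated, so the exponent of `v` is the intended one for `l ≥ 1` only. -/
noncomputable def densityMonomial {l : ℕ} (m : Fin l → ℕ) : RadialFunctional := fun ρ v r =>
  (∏ i, iteratedDeriv (m i) ρ r) * r ^ (2 * l + ∑ i, m i) / v r ^ (2 * l - 1)

/-- The functionals admissible on the right-hand side at level `k`: the span of the density
monomials of multi-indices `m` of length `l ≥ 1` (written `l + 1` here) with `l + |m| ≤ k`. -/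
def densitySpan (k : ℕ) : Submodule ℝ RadialFunctional :=
  Submodule.span ℝ {F | ∃ (l : ℕ) (m : Fin (l + 1) → ℕ),
    l + 1 + ∑ i, m i ≤ k ∧ densityMonomial m = F}

lemma densityMonomial_mem_densitySpan {k l : ℕ} {m : Fin (l + 1) → ℕ}
    (h : l + 1 + ∑ i, m i ≤ k) : densityMonomial m ∈ densitySpan k :=
  Submodule.subset_span ⟨l, m, h, rfl⟩

lemma densitySpan_mono : Monotone densitySpan := fun _ _ hk =>
  Submodule.span_mono fun _ ⟨l, m, h, hF⟩ => ⟨l, m, h.trans hk, hF⟩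

lemma exists_coeff_of_mem_densitySpan {k : ℕ} {F : RadialFunctional} (hF : F ∈ densitySpan k) :
    ∃ β : (l : ℕ) → (Fin l → ℕ) → ℝ,
      ∑ l ∈ Finset.Icc 1 k,
        ∑ m ∈ (Fintype.piFinset fun _ : Fin l => Finset.range (k - l + 1)).filter
            (fun m => ∑ i, m i ≤ k - l),
          β l m • densityMonomial m = F := by
  let indices : Finset ((l : ℕ) × (Fin l → ℕ)) := (Finset.Icc 1 k).sigma fun l =>
    (Fintype.piFinset fun _ : Fin l => Finset.range (k - l + 1)).filter
      (fun m => ∑ i, m i ≤ k - l)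
  have mem_indices (l : ℕ) (m : Fin (l + 1) → ℕ) (h : l + 1 + ∑ i, m i ≤ k) :
      (⟨l + 1, m⟩ : (l : ℕ) × (Fin l → ℕ)) ∈ indices := by
    simp only [indices, Finset.mem_sigma, Finset.mem_Icc, Finset.mem_filter,
      Fintype.mem_piFinset, Finset.mem_range]
    refine ⟨by omega, fun i => ?_, by omega⟩
    have : m i ≤ ∑ j, m j := Finset.single_le_sum_of_canonicallyOrdered (Finset.mem_univ i)
    omega
  have hF' : F ∈ Submodule.span ℝ ((fun p : (l : ℕ) × (Fin l → ℕ) => densityMonomial p.2) ''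
      (indices : Set ((l : ℕ) × (Fin l → ℕ)))) :=
    Submodule.span_mono (by
      rintro _ ⟨l, m, h, rfl⟩
      exact ⟨⟨l + 1, m⟩, mem_indices l m h, rfl⟩) hF
  obtain ⟨c, hc⟩ := (Submodule.mem_span_image_finset_iff_exists_fun' ℝ).1 hF'
  exact ⟨fun l m => c ⟨l, m⟩, by rw [← hc, Finset.sum_sigma]⟩

/-- `v` solves `r v' + a v = b ρ r² / v` on the open set `s`, where neither `r` nor `v` vanishes,
for a density `ρ` of class `C^M`. -/
structure IsVelocityProfile (a b : ℝ) (M : ℕ) (ρ v : ℝ → ℝ) (s : Set ℝ) : Prop where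
  isOpen : IsOpen s
  radius_ne_zero : ∀ r ∈ s, r ≠ 0
  velocity_ne_zero : ∀ r ∈ s, v r ≠ 0
  contDiffOn_density : ContDiffOn ℝ M ρ s
  hasDerivAt_velocity : ∀ r ∈ s, HasDerivAt v ((b * ρ r * r ^ 2 / v r - a * v r) / r) r

namespace IsVelocityProfile

variable {a b : ℝ} {M : ℕ} {ρ v : ℝ → ℝ} {s : Set ℝ} {r : ℝ}

lemma of_le {N : ℕ} (h : IsVelocityProfile a b M ρ v s) (hN : N ≤ M) :
    IsVelocityProfile a b N ρ v s :=
  { h with contDiffOn_density := h.contDiffOn_density.of_le (by exact_mod_cast hN) }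

lemma contDiffOn_velocity (h : IsVelocityProfile a b M ρ v s) :
    ContDiffOn ℝ (M + 1 : ℕ) v s := by
  have deriv_eq : ∀ r ∈ s, deriv v r = (b * ρ r * r ^ 2 / v r - a * v r) / r :=
    fun r hr => (h.hasDerivAt_velocity r hr).deriv
  have gain_one (N : ℕ) (hN : N ≤ M) (hv : ContDiffOn ℝ N v s) :
      ContDiffOn ℝ (N + 1 : ℕ) v s := by
    have hρ : ContDiffOn ℝ N ρ s := (h.of_le hN).contDiffOn_density
    rw [Nat.cast_add_one, contDiffOn_succ_iff_deriv_of_isOpen h.isOpen]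
    refine ⟨fun r hr => (h.hasDerivAt_velocity r hr).differentiableAt.differentiableWithinAt,
      by simp, ContDiffOn.congr ?_ deriv_eq⟩
    exact ((((contDiffOn_const.mul hρ).mul (contDiffOn_id.pow 2)).div hv h.velocity_ne_zero).sub
      (contDiffOn_const.mul hv)).div contDiffOn_id h.radius_ne_zero
  have regularity (N : ℕ) (hN : N ≤ M + 1) : ContDiffOn ℝ N v s := by
    induction N with
    | zero =>
      exact contDiffOn_zero.2 fun r hr =>
        (h.hasDerivAt_velocity r hr).continuousAt.continuousWithinAt
    | succ N ih => exact gain_one N (by omega) (ih (by omega))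
  exact regularity (M + 1) le_rfl

lemma hasDerivAt_iteratedDeriv_velocity (h : IsVelocityProfile a b M ρ v s) (hr : r ∈ s)
    {j : ℕ} (hj : j ≤ M) : HasDerivAt (iteratedDeriv j v) (iteratedDeriv (j + 1) v r) r :=
  hasDerivAt_iteratedDeriv (h.contDiffOn_velocity.contDiffAt (h.isOpen.mem_nhds hr))
    (by exact_mod_cast Nat.lt_succ_of_le hj)

lemma hasDerivAt_densityMonomial (h : IsVelocityProfile a b M ρ v s) (hr : r ∈ s) {l : ℕ}
    (m : Fin (l + 1) → ℕ) (hm : ∀ i, m i < M) :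
    HasDerivAt (densityMonomial m ρ v)
      ((∑ i, densityMonomial (Function.update m i (m i + 1)) ρ v r
        + (2 * (l + 1) + (∑ i, m i : ℕ) + (2 * l + 1) * a) * densityMonomial m ρ v r
        - (2 * l + 1) * b * densityMonomial (Fin.cons 0 m : Fin (l + 2) → ℕ) ρ v r) / r) r := by
  have hr0 := h.radius_ne_zero r hr
  have hv0 := h.velocity_ne_zero r hr
  have hprod := hasDerivAt_prod_iteratedDeriv
    (h.contDiffOn_density.contDiffAt (h.isOpen.mem_nhds hr)) m fun i => by exact_mod_cast hm i
  have hquot := (hprod.fun_mul (hasDerivAt_pow (2 * (l + 1) + ∑ i, m i) r)).fun_div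
    ((h.hasDerivAt_velocity r hr).fun_pow (2 * l + 1)) (pow_ne_zero _ hv0)
  have cons_prod : ∏ i, iteratedDeriv ((Fin.cons 0 m : Fin (l + 2) → ℕ) i) ρ r
      = ρ r * ∏ i, iteratedDeriv (m i) ρ r := by
    simp [Fin.prod_univ_succ (n := l + 1)]
  refine hquot.congr_deriv ?_
  simp only [densityMonomial, sum_update_add_one, cons_prod, Fin.sum_cons, ← Finset.sum_mul,
    ← Finset.sum_div, show 2 * (l + 1) - 1 = 2 * l + 1 by omega,
    show 2 * (l + 1 + 1) - 1 = 2 * l + 3 by omega, Nat.add_sub_cancel,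
    show 2 * (l + 1) + ∑ i, m i - 1 = 2 * l + 1 + ∑ i, m i by omega]
  push_cast
  field_simp
  ring

end IsVelocityProfile

lemma exists_hasDerivAt_of_mem_densitySpan (a b : ℝ) {k : ℕ} {F : RadialFunctional}
    (hF : F ∈ densitySpan k) :
    ∃ G ∈ densitySpan (k + 1), ∀ ρ v s, IsVelocityProfile a b k ρ v s → ∀ r ∈ s,
      HasDerivAt (F ρ v) (G ρ v r / r) r := by
  induction hF using Submodule.span_induction with
  | mem F hF =>
    obtain ⟨l, m, hlm, rfl⟩ := hF
    refine ⟨∑ i, densityMonomial (Function.update m i (m i + 1))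
      + (2 * (l + 1) + (∑ i, m i : ℕ) + (2 * l + 1) * a : ℝ) • densityMonomial m
      - ((2 * l + 1) * b) • densityMonomial (Fin.cons 0 m : Fin (l + 2) → ℕ), ?_, ?_⟩
    · refine sub_mem (add_mem (sum_mem fun i _ => ?_) (Submodule.smul_mem _ _ ?_))
        (Submodule.smul_mem _ _ ?_) <;> apply densityMonomial_mem_densitySpan
      · rw [sum_update_add_one]
        omega
      · omega
      · rw [Fin.sum_cons]
        omega
    · intro ρ v s h r hr
      have hm (i : Fin (l + 1)) : m i < k := by
        have : m i ≤ ∑ j, m j := Finset.single_le_sum_of_canonicallyOrdered (Finset.mem_univ i)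
        omega
      simpa using h.hasDerivAt_densityMonomial hr m hm
  | zero => exact ⟨0, zero_mem _, fun _ _ _ _ _ _ => by simp⟩
  | add F₁ F₂ _ _ ih₁ ih₂ =>
    obtain ⟨G₁, hG₁, hderiv₁⟩ := ih₁
    obtain ⟨G₂, hG₂, hderiv₂⟩ := ih₂
    refine ⟨G₁ + G₂, add_mem hG₁ hG₂, fun ρ v s h r hr => ?_⟩
    exact ((hderiv₁ ρ v s h r hr).add (hderiv₂ ρ v s h r hr)).congr_deriv (add_div _ _ _).symm
  | smul c F _ ih =>
    obtain ⟨G, hG, hderiv⟩ := ih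
    refine ⟨c • G, Submodule.smul_mem _ c hG, fun ρ v s h r hr => ?_⟩
    exact ((hderiv ρ v s h r hr).const_smul c).congr_deriv (mul_div_assoc _ _ _).symm

theorem exists_mem_densitySpan_eq_leading_terms (a b : ℝ) (k : ℕ) :
    ∃ F ∈ densitySpan (k + 1), ∀ ρ v s, IsVelocityProfile a b k ρ v s → ∀ r ∈ s,
      r ^ (k + 1) * iteratedDeriv (k + 1) v r + (a + k) * r ^ k * iteratedDeriv k v r
        = F ρ v r := by
  induction k with
  | zero =>
    refine ⟨b • densityMonomial (fun _ : Fin 1 => 0),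
      Submodule.smul_mem _ _ (densityMonomial_mem_densitySpan (by simp)), fun ρ v s h r hr => ?_⟩
    have hr0 := h.radius_ne_zero r hr
    simp only [densityMonomial, zero_add, iteratedDeriv_one, iteratedDeriv_zero,
      (h.hasDerivAt_velocity r hr).deriv, Pi.smul_apply, smul_eq_mul, Finset.univ_unique,
      Finset.prod_const, Finset.sum_const_zero, Finset.card_singleton, Nat.cast_zero]
    field_simp
    ring
  | succ k ih =>
    obtain ⟨F, hF, hF_eq⟩ := ih
    obtain ⟨G, hG, hG_deriv⟩ := exists_hasDerivAt_of_mem_densitySpan a b hF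
    refine ⟨G - (k : ℝ) • F,
      sub_mem hG (Submodule.smul_mem _ _ (densitySpan_mono (Nat.le_succ _) hF)),
      fun ρ v s h r hr => ?_⟩
    have hr0 := h.radius_ne_zero r hr
    have hlead := ((hasDerivAt_pow (k + 1) r).fun_mul
        (h.hasDerivAt_iteratedDeriv_velocity hr le_rfl)).fun_add
      (((hasDerivAt_pow k r).const_mul (a + k)).fun_mul
        (h.hasDerivAt_iteratedDeriv_velocity hr (Nat.le_succ k)))
    have heq : F ρ v =ᶠ[nhds r] fun x =>
        x ^ (k + 1) * iteratedDeriv (k + 1) v x + (a + k) * x ^ k * iteratedDeriv k v x := by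
      filter_upwards [h.isOpen.mem_nhds hr] with x hx
      exact (hF_eq ρ v s (h.of_le (Nat.le_succ k)) x hx).symm
    have hderiv := (hG_deriv ρ v s h r hr).unique (hlead.congr_of_eventuallyEq heq)
    rw [div_eq_iff hr0] at hderiv
    simp only [Pi.sub_apply, Pi.smul_apply, smul_eq_mul, hderiv,
      ← hF_eq ρ v s (h.of_le (Nat.le_succ k)) r hr, Nat.add_sub_cancel,
      natCast_mul_pow_sub_one k hr0]
    push_cast
    field_simp
    ring

lemma isVelocityProfile_of_eq_sqrt {c : ℝ} {d M : ℕ} {ρ m v : ℝ → ℝ}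
    (hρ : ContDiffOn ℝ M ρ (Ioi 0)) (hm : ∀ r > 0, HasDerivAt m (ρ r * r ^ (d + 1)) r)
    (hv : ∀ r, v r = √(c * m r / r ^ d)) :
    IsVelocityProfile (d / 2) (c / 2) M ρ v (Ioi 0 ∩ v ⁻¹' Ioi 0) where
  isOpen := by
    refine ContinuousOn.isOpen_inter_preimage (fun r hr => ?_) isOpen_Ioi isOpen_Ioi
    have hcont : ContinuousAt (fun r => √(c * m r / r ^ d)) r :=
      ((continuousAt_const.mul (hm r hr).continuousAt).div (continuousAt_id.pow d)
        (pow_ne_zero d hr.ne')).sqrt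
    rw [funext hv]
    exact hcont.continuousWithinAt
  radius_ne_zero _ hr := hr.1.ne'
  velocity_ne_zero _ hr := hr.2.ne'
  contDiffOn_density := hρ.mono inter_subset_left
  hasDerivAt_velocity := by
    rintro r ⟨hr, hvr⟩
    have hr0 : r ≠ 0 := hr.ne'
    have hv0 : v r ≠ 0 := hvr.ne'
    have hpos : 0 < c * m r / r ^ d := Real.sqrt_pos.1 (hv r ▸ hvr)
    have hsq : c * m r = v r ^ 2 * r ^ d := by
      rw [hv r, Real.sq_sqrt hpos.le, div_mul_cancel₀ _ (pow_ne_zero d hr0)]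
    have hderiv := (((hm r hr).const_mul c).fun_div (hasDerivAt_pow d r)
      (pow_ne_zero d hr0)).sqrt hpos.ne'
    rw [← funext hv, ← hv r, hsq] at hderiv
    refine hderiv.congr_deriv ?_
    rw [natCast_mul_pow_sub_one d hr0]
    field_simp
    ring

lemma hasDerivAt_integral_of_continuousOn_Ioi {E : Type*} [NormedAddCommGroup E]
    [NormedSpace ℝ E] [CompleteSpace E] {f : ℝ → E} {a r : ℝ} (hf : ContinuousOn f (Ioi a))
    (hint : IntervalIntegrable f volume a r) (hr : a < r) :
    HasDerivAt (fun x => ∫ s in a..x, f s) (f r) r :=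
  intervalIntegral.integral_hasDerivAt_right hint
    (hf.stronglyMeasurableAtFilter isOpen_Ioi r hr) (hf.continuousAt (Ioi_mem_nhds hr))

lemma isVelocityProfile_of_mass {n M : ℕ} (hn : 3 ≤ n) {μ : ℝ} {ρ m v : ℝ → ℝ}
    (hρ : ContDiffOn ℝ M ρ (Ioi 0)) (hm : ∀ r, m r = ∫ s in (0 : ℝ)..r, ρ s * s ^ (n - 1))
    (hint : ∀ r > (0 : ℝ), IntervalIntegrable (fun s => ρ s * s ^ (n - 1)) volume 0 r)
    (hv : ∀ r, v r = √(2 * μ * m r / (((n : ℝ) - 2) * r ^ (n - 2)))) :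
    IsVelocityProfile (((n : ℝ) - 2) / 2) (μ / ((n : ℝ) - 2)) M ρ v (Ioi 0 ∩ v ⁻¹' Ioi 0) := by
  obtain ⟨d, rfl⟩ : ∃ d, n = d + 2 := ⟨n - 2, by omega⟩
  have hd : ((d + 2 : ℕ) : ℝ) - 2 = d := by push_cast; ring
  simp only [hd, Nat.add_sub_cancel, show d + 2 - 1 = d + 1 by omega] at hm hint hv ⊢
  have hmass : ∀ r > 0, HasDerivAt m (ρ r * r ^ (d + 1)) r := fun r hr => by
    rw [funext hm]
    exact hasDerivAt_integral_of_continuousOn_Ioi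
      (hρ.continuousOn.mul (continuousOn_id.pow _)) (hint r hr) hr
  have hv' (r : ℝ) : v r = √(2 * μ / d * m r / r ^ d) := by
    rw [hv r]
    congr 1
    ring
  have hb : 2 * μ / d / 2 = μ / d := by ring
  exact hb ▸ isVelocityProfile_of_eq_sqrt hρ hmass hv'

theorem stmt1_general (n : ℕ) (hn : 3 ≤ n) (μ : ℝ) :
    ∃ α : ℕ → ℕ → ℝ, ∃ β : ℕ → (l : ℕ) → (Fin l → ℕ) → ℝ,
      (∀ k, α k k = 1) ∧
      ∀ (M : ℕ) (ρ₀ m₀ v₀ : ℝ → ℝ), ContDiffOn ℝ M ρ₀ (Ioi 0) →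
        (∀ r, m₀ r = ∫ s in (0 : ℝ)..r, ρ₀ s * s ^ (n - 1)) →
        (∀ r > (0 : ℝ), IntervalIntegrable (fun s => ρ₀ s * s ^ (n - 1)) volume 0 r) →
        (∀ r, v₀ r = √(2 * μ * m₀ r / (((n : ℝ) - 2) * r ^ (n - 2)))) →
        ∀ r > (0 : ℝ), 0 < v₀ r →
          (∀ j ≤ M, DifferentiableAt ℝ (iteratedDeriv j v₀) r) ∧
          ∀ k, 1 ≤ k → k ≤ M + 1 →
            ∑ j ∈ Finset.range (k + 1), α j k * r ^ j * iteratedDeriv j v₀ r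
              = ∑ l ∈ Finset.Icc 1 k,
                  ∑ m ∈ (Fintype.piFinset fun _ : Fin l => Finset.range (k - l + 1)).filter
                      (fun m => ∑ i, m i ≤ k - l),
                    β k l m * (∏ i, iteratedDeriv (m i) ρ₀ r) * r ^ (2 * l + ∑ i, m i) /
                      v₀ r ^ (2 * l - 1) := by
  let a : ℝ := ((n : ℝ) - 2) / 2
  choose F hF hF_eq using exists_mem_densitySpan_eq_leading_terms a (μ / ((n : ℝ) - 2))
  choose β hβ using fun k => exists_coeff_of_mem_densitySpan (hF k)
  refine ⟨fun j k => (if j = k then 1 else 0) + if j + 1 = k then a + j else 0,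
    fun k => β (k - 1), by simp, fun M ρ₀ m₀ v₀ hρ hm hint hv r hr hvr => ?_⟩
  have hprofile := isVelocityProfile_of_mass hn hρ hm hint hv
  refine ⟨fun j hj =>
    (hprofile.hasDerivAt_iteratedDeriv_velocity ⟨hr, hvr⟩ hj).differentiableAt, ?_⟩
  rintro (_ | k) hk hkM
  · omega
  calc _ = r ^ (k + 1) * iteratedDeriv (k + 1) v₀ r + (a + k) * r ^ k * iteratedDeriv k v₀ r := by
        simp [add_mul, Finset.sum_add_distrib, ite_mul]
    _ = F k ρ₀ v₀ r := hF_eq k ρ₀ v₀ _ (hprofile.of_le (by omega)) r ⟨hr, hvr⟩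
    _ = _ := by
        simp only [← hβ k, Finset.sum_apply, Pi.smul_apply, smul_eq_mul, densityMonomial,
          Nat.add_sub_cancel, mul_assoc, mul_div_assoc]

/-- Higher-order structural identity for the special initial velocity `v₀` of the
attractive radial Euler–Poisson system: there are universal constants `α_{j,k}`
(with `α_{k,k} = 1`) and `β_{l,m,k}` such that
`∑_{j=0}^k α_{j,k} r^j v₀^{(j)}(r)
  = ∑_{l=1}^k ∑_{|m| ≤ k-l} β_{l,m,k} (∏ᵢ ρ₀^{(mᵢ)}(r)) r^{2l+|m|} / v₀(r)^{2l-1}`. -/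
theorem stmt1 (n : ℕ) (hn : 3 ≤ n) (μ : ℝ) (hμ : 0 < μ) (M : ℕ) (hM : 0 < M) :
    ∃ α : ℕ → ℕ → ℝ, ∃ β : ℕ → (l : ℕ) → (Fin l → ℕ) → ℝ,
      (∀ k ≤ M + 1, α k k = 1) ∧
      ∀ A₀ : ℝ → ℂ, ContDiffOn ℝ (M : ℕ∞) A₀ (Set.Ioi 0) →
        ∀ ρ₀ m₀ v₀ : ℝ → ℝ,
          (∀ r, ρ₀ r = ‖A₀ r‖ ^ 2) →
          (∀ r, m₀ r = ∫ s in (0:ℝ)..r, ‖A₀ s‖ ^ 2 * s ^ (n - 1)) →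
          (∀ r > (0:ℝ), IntervalIntegrable (fun s => ‖A₀ s‖ ^ 2 * s ^ (n - 1)) volume 0 r) →
          (∀ r, v₀ r = Real.sqrt (2 * μ * m₀ r / (((n : ℝ) - 2) * r ^ (n - 2)))) →
          ∀ r > (0:ℝ), 0 < v₀ r →
            (∀ j ≤ M, DifferentiableAt ℝ (iteratedDeriv j v₀) r) ∧
            ∀ k, 1 ≤ k → k ≤ M + 1 →
              ∑ j ∈ Finset.range (k + 1), α j k * r ^ j * iteratedDeriv j v₀ r
                = ∑ l ∈ Finset.Icc 1 k,
                    ∑ m ∈ (Fintype.piFinset fun _ : Fin l => Finset.range (k - l + 1)).filter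
                        (fun m => ∑ i, m i ≤ k - l),
                      β k l m * (∏ i, iteratedDeriv (m i) ρ₀ r) * r ^ (2 * l + ∑ i, m i) /
                        v₀ r ^ (2 * l - 1) := by
  obtain ⟨α, β, hα, hidentity⟩ := stmt1_general n hn μ
  refine ⟨α, β, fun k _ => hα k, fun A₀ hA ρ₀ m₀ v₀ hρ hm hint hv => ?_⟩
  obtain rfl : ρ₀ = fun r => ‖A₀ r‖ ^ 2 := funext hρ
  exact hidentity M _ m₀ v₀ (by exact_mod_cast hA.norm_sq ℝ) hm hint hv
end

section
/- Let n ≥ 3, μ > 0, R > 0, m₀ ≥ 0, and v₀ := √(2μ m₀/((n−2) R^{n−2})). If Y : [0,∞) → (0,∞) is twice continuously differentiable with Y''(t) = −μ m₀ / Y(t)^{n−1} for all t ≥ 0, Y(0) = R, and Y'(0) = v₀, then Y(t) = R·(1 + (n v₀/(2R)) t)^{2/n} for all t ≥ 0. -/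
open Set

/-!
The energy `(n - 2) V² - 2κ / Y ^ (n - 2)` of a solution of `Y'' = -κ / Y ^ (n - 1)`, `V = Y'`, is
conserved, and `V Y ^ (n / 2 - 1)` has a derivative proportional to it. The critical balance says
that the energy vanishes initially; then `V Y ^ (n / 2 - 1)`, which is `2 / n` times the derivative
of `Y ^ (n / 2)`, is constant, so `Y ^ (n / 2)` is affine in time. As this needs no square root of
`V²`, the sign of the velocity never has to be discussed.
-/

theorem eq_add_smul_of_hasDerivWithinAt_const {E : Type*} [NormedAddCommGroup E] [NormedSpace ℝ E]
    {f : ℝ → E} {c : E} {s : Set ℝ} {t t₀ : ℝ} (hs : Convex ℝ s)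
    (hf : ∀ x ∈ s, HasDerivWithinAt f c s x) (ht₀ : t₀ ∈ s) (ht : t ∈ s) :
    f t = f t₀ + (t - t₀) • c := by
  have hderiv : ∀ x ∈ s, HasDerivWithinAt (fun x ↦ f x - x • c) 0 s x := fun x hx ↦ by
    simpa using (hf x hx).fun_sub ((hasDerivWithinAt_id x s).smul_const c)
  have hdist := hs.norm_image_sub_le_of_norm_hasDerivWithin_le (C := 0) hderiv
    (fun _ _ ↦ norm_zero.le) ht₀ ht
  rw [zero_mul, norm_le_zero_iff, sub_eq_zero, sub_eq_iff_eq_add] at hdist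
  rw [hdist, sub_smul]
  abel

theorem eq_of_hasDerivWithinAt_zero {E : Type*} [NormedAddCommGroup E] [NormedSpace ℝ E]
    {f : ℝ → E} {s : Set ℝ} {t t₀ : ℝ} (hs : Convex ℝ s)
    (hf : ∀ x ∈ s, HasDerivWithinAt f 0 s x) (ht₀ : t₀ ∈ s) (ht : t ∈ s) : f t = f t₀ := by
  simpa using eq_add_smul_of_hasDerivWithinAt_const hs hf ht₀ ht

theorem rpow_sub_one_eq_rpow_sub_two_mul {y : ℝ} (hy : y ≠ 0) (p : ℝ) :
    y ^ (p - 1) = y ^ (p - 2) * y := by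
  rw [← Real.rpow_add_one hy]
  ring_nf

/-- `Y` is a positive solution of `Y'' = -κ / Y ^ (n - 1)` on the time set `s`, with velocity `V`:
a characteristic of the radial pressureless Euler–Poisson system in the (real) dimension `n`, where
`κ` is the coupling strength times the enclosed mass. Derivatives are taken within `s`, hence
one-sided at the endpoints of an interval. -/
structure IsRadialCharacteristic (n κ : ℝ) (s : Set ℝ) (Y V : ℝ → ℝ) : Prop where
  pos : ∀ t ∈ s, 0 < Y t
  hasDerivWithinAt : ∀ t ∈ s, HasDerivWithinAt Y (V t) s t
  hasDerivWithinAt_velocity : ∀ t ∈ s, HasDerivWithinAt V (-κ / Y t ^ (n - 1)) s t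

/-- The mechanical energy of a characteristic at radius `y` with velocity `v`, multiplied by
`2 (n - 2)` which avoids a division by zero at `n = 2`. -/
noncomputable def radialEnergy (n κ y v : ℝ) : ℝ :=
  (n - 2) * v ^ 2 - 2 * κ / y ^ (n - 2)

theorem radialEnergy_sqrt_eq_zero {n κ y : ℝ} (hn : 2 < n) (hκ : 0 ≤ κ) (hy : 0 ≤ y) :
    radialEnergy n κ y √(2 * κ / ((n - 2) * y ^ (n - 2))) = 0 := by
  have hn' : 0 < n - 2 := sub_pos.2 hn
  rw [radialEnergy, Real.sq_sqrt (by positivity), mul_div_assoc', mul_div_mul_left _ _ hn'.ne',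
    sub_self]

namespace IsRadialCharacteristic

variable {n κ t t₀ : ℝ} {s : Set ℝ} {Y V : ℝ → ℝ}

theorem radialEnergy_eq (h : IsRadialCharacteristic n κ s Y V) (hs : Convex ℝ s)
    (ht₀ : t₀ ∈ s) (ht : t ∈ s) :
    radialEnergy n κ (Y t) (V t) = radialEnergy n κ (Y t₀) (V t₀) := by
  refine eq_of_hasDerivWithinAt_zero (f := fun t ↦ radialEnergy n κ (Y t) (V t)) hs
    (fun x hx ↦ ?_) ht₀ ht
  have hY := h.pos x hx
  have hkinetic := ((h.hasDerivWithinAt_velocity x hx).fun_pow 2).const_mul (n - 2)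
  have hpotential := ((h.hasDerivWithinAt x hx).rpow_const (p := n - 2) (.inl hY.ne')).fun_inv
    (by positivity) |>.const_mul (2 * κ)
  refine (hkinetic.sub hpotential).congr_deriv ?_
  rw [rpow_sub_one_eq_rpow_sub_two_mul hY.ne', Real.rpow_sub_one hY.ne']
  field_simp
  ring

theorem hasDerivWithinAt_velocity_mul_rpow (h : IsRadialCharacteristic n κ s Y V) (ht : t ∈ s) :
    HasDerivWithinAt (fun t ↦ V t * Y t ^ (n / 2 - 1))
      (radialEnergy n κ (Y t) (V t) / 2 * Y t ^ (n / 2 - 2)) s t := by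
  have hY := h.pos t ht
  refine ((h.hasDerivWithinAt_velocity t ht).fun_mul
    ((h.hasDerivWithinAt t ht).rpow_const (p := n / 2 - 1) (.inl hY.ne'))).congr_deriv ?_
  rw [radialEnergy, sub_sub, one_add_one_eq_two, rpow_sub_one_eq_rpow_sub_two_mul hY.ne' n,
    rpow_sub_one_eq_rpow_sub_two_mul hY.ne' (n / 2)]
  field_simp
  ring

theorem velocity_mul_rpow_eq (h : IsRadialCharacteristic n κ s Y V) (hs : Convex ℝ s)
    (ht₀ : t₀ ∈ s) (henergy : radialEnergy n κ (Y t₀) (V t₀) = 0) (ht : t ∈ s) :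
    V t * Y t ^ (n / 2 - 1) = V t₀ * Y t₀ ^ (n / 2 - 1) := by
  refine eq_of_hasDerivWithinAt_zero (f := fun t ↦ V t * Y t ^ (n / 2 - 1)) hs
    (fun x hx ↦ ?_) ht₀ ht
  simpa [h.radialEnergy_eq hs ht₀ hx, henergy] using h.hasDerivWithinAt_velocity_mul_rpow hx

theorem rpow_half_eq (h : IsRadialCharacteristic n κ s Y V) (hs : Convex ℝ s)
    (ht₀ : t₀ ∈ s) (henergy : radialEnergy n κ (Y t₀) (V t₀) = 0) (ht : t ∈ s) :
    Y t ^ (n / 2) = Y t₀ ^ (n / 2) * (1 + n * V t₀ / (2 * Y t₀) * (t - t₀)) := by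
  have hY₀ := h.pos t₀ ht₀
  have hderiv : ∀ x ∈ s, HasDerivWithinAt (fun t ↦ Y t ^ (n / 2))
      (n / 2 * (V t₀ * Y t₀ ^ (n / 2 - 1))) s x := fun x hx ↦ by
    refine ((h.hasDerivWithinAt x hx).rpow_const (.inl (h.pos x hx).ne')).congr_deriv ?_
    rw [← h.velocity_mul_rpow_eq hs ht₀ henergy hx]
    ring
  rw [eq_add_smul_of_hasDerivWithinAt_const hs hderiv ht₀ ht, smul_eq_mul,
    Real.rpow_sub_one hY₀.ne']
  field_simp

end IsRadialCharacteristic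

theorem stmt3_general {n κ t₀ : ℝ} (hn : n ≠ 0) {s : Set ℝ} (hs : Convex ℝ s) {Y V : ℝ → ℝ}
    (h : IsRadialCharacteristic n κ s Y V) (ht₀ : t₀ ∈ s)
    (henergy : radialEnergy n κ (Y t₀) (V t₀) = 0) :
    ∀ t ∈ s, Y t = Y t₀ * (1 + n * V t₀ / (2 * Y t₀) * (t - t₀)) ^ (2 / n) := by
  intro t ht
  have hY := h.pos t ht
  have hY₀ := h.pos t₀ ht₀
  have hhalf := h.rpow_half_eq hs ht₀ henergy ht
  have hbase : 0 < 1 + n * V t₀ / (2 * Y t₀) * (t - t₀) :=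
    pos_of_mul_pos_right (hhalf ▸ Real.rpow_pos_of_pos hY _) (by positivity)
  have hroot {y : ℝ} (hy : 0 < y) : (y ^ (n / 2)) ^ (2 / n) = y := by
    rw [← inv_div n 2, Real.rpow_rpow_inv hy.le (by positivity)]
  calc Y t = (Y t ^ (n / 2)) ^ (2 / n) := (hroot hY).symm
    _ = (Y t₀ ^ (n / 2)) ^ (2 / n) * (1 + n * V t₀ / (2 * Y t₀) * (t - t₀)) ^ (2 / n) := by
      rw [hhalf, Real.mul_rpow (by positivity) hbase.le]
    _ = Y t₀ * (1 + n * V t₀ / (2 * Y t₀) * (t - t₀)) ^ (2 / n) := by rw [hroot hY₀]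

/-- Uniqueness of the critically balanced global characteristic of the attractive radial
Euler–Poisson system: any positive C² solution of `Y'' = -μ m₀ / Y^{n-1}` on `[0,∞)` with
`Y(0) = R`, `Y'(0) = v₀ = √(2μ m₀/((n-2) R^{n-2}))` equals `R (1 + (n v₀/(2R)) t)^{2/n}`. -/
theorem stmt3 (n : ℕ) (hn : 3 ≤ n) (μ : ℝ) (hμ : 0 < μ) (R : ℝ) (hR : 0 < R)
    (m₀ : ℝ) (hm₀ : 0 ≤ m₀) (v₀ : ℝ)
    (hv₀ : v₀ = Real.sqrt (2 * μ * m₀ / (((n : ℝ) - 2) * R ^ (n - 2))))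
    (Y Y' : ℝ → ℝ)
    (hpos : ∀ t ∈ Ici (0:ℝ), 0 < Y t)
    (hY : ∀ t ∈ Ici (0:ℝ), HasDerivWithinAt Y (Y' t) (Ici 0) t)
    (hY' : ∀ t ∈ Ici (0:ℝ), HasDerivWithinAt Y' (-μ * m₀ / Y t ^ (n - 1)) (Ici 0) t)
    (hY'cont : ContinuousOn Y' (Ici 0))
    (hY0 : Y 0 = R) (hY'0 : Y' 0 = v₀) :
    ∀ t ∈ Ici (0:ℝ), Y t = R * (1 + (n : ℝ) * v₀ / (2 * R) * t) ^ ((2:ℝ) / n) := by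
  have hpow (j : ℕ) (hj : j ≤ n) (y : ℝ) : y ^ ((n : ℝ) - j) = y ^ (n - j) := by
    rw [← Nat.cast_sub hj, Real.rpow_natCast]
  have hchar : IsRadialCharacteristic n (μ * m₀) (Ici 0) Y Y' := ⟨hpos, hY, fun t ht ↦ by
    simpa [← hpow 1 (by lia)] using hY' t ht⟩
  have henergy : radialEnergy n (μ * m₀) (Y 0) (Y' 0) = 0 := by
    rw [hY'0, hv₀, hY0, ← hpow 2 (by lia), mul_assoc]
    exact radialEnergy_sqrt_eq_zero (by exact_mod_cast hn) (by positivity) hR.le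
  simpa [hY0, hY'0] using
    stmt3_general (by positivity) (convex_Ici 0) hchar self_mem_Ici henergy
end

section
/- Let μ > 0, m₀ > 0, R > 0, and v₀ ∈ ℝ. If X : [0,T) → (0,∞) is twice continuously differentiable with X''(t) = −μ m₀ / X(t) for all t ∈ [0,T), X(0) = R, and X'(0) = v₀, then X(t) ≤ R·exp(v₀²/(2μ m₀)) for all t ∈ [0,T). Moreover, there is no such solution with T = ∞: every positive solution reaches zero in finite time. -/
open Set

/-!
The energy `X'² + 2 k log X` of a positive solution of `X'' = -k / X` is conserved. As `X'² ≥ 0`,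
conservation bounds `log X`, so `X ≤ M` for some constant `M`, and hence `X'' ≤ -k / M < 0` for as
long as the solution lives. If it lived forever, integrating once would give `X' → -∞` and
integrating again `X → -∞`, contradicting `X > 0`.
-/

open Filter

theorem tendsto_atBot_of_eventually_hasDerivAt_le {f f' : ℝ → ℝ} {c : ℝ} (hc : c < 0)
    (hf : ∀ᶠ t in atTop, HasDerivAt f (f' t) t) (hf' : ∀ᶠ t in atTop, f' t ≤ c) :
    Tendsto f atTop atBot := by
  obtain ⟨b, hb⟩ := eventually_atTop.1 (hf.and hf')
  have le_line : ∀ t ≥ b, f t ≤ f b + c * (t - b) := fun t hbt ↦ by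
    have := (convex_Ici b).image_sub_le_mul_sub_of_deriv_le
      (fun s hs ↦ (hb s hs).1.continuousAt.continuousWithinAt)
      (fun s hs ↦ (hb s (interior_subset hs)).1.differentiableAt.differentiableWithinAt)
      (fun s hs ↦ (hb s (interior_subset hs)).1.deriv.trans_le (hb s (interior_subset hs)).2)
      b self_mem_Ici t hbt hbt
    linarith
  have line_tendsto : Tendsto (fun t ↦ f b + c * (t - b)) atTop atBot :=
    tendsto_atBot_add_const_left _ _
      ((tendsto_atTop_add_const_right _ (-b) tendsto_id).const_mul_atTop_of_neg hc)
  exact tendsto_atBot_mono' _ (eventually_atTop.2 ⟨b, le_line⟩) line_tendsto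

/-- `X` is a positive solution of the characteristic equation `X'' = -k / X` on `s`, with velocity
`X'`; in the Euler–Poisson system `k = μ m₀`. Derivatives are taken within `s`, hence are one-sided
at the endpoints of an interval, and `X'` is explicit so that no junk value of `deriv` enters. -/
structure IsPositiveSolutionOn (k : ℝ) (X X' : ℝ → ℝ) (s : Set ℝ) : Prop where
  pos : ∀ t ∈ s, 0 < X t
  hasDerivWithinAt : ∀ t ∈ s, HasDerivWithinAt X (X' t) s t
  hasDerivWithinAt_velocity : ∀ t ∈ s, HasDerivWithinAt X' (-k / X t) s t

namespace IsPositiveSolutionOn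

variable {k t₀ t : ℝ} {X X' : ℝ → ℝ} {s : Set ℝ}

theorem hasDerivWithinAt_energy (h : IsPositiveSolutionOn k X X' s) (ht : t ∈ s) :
    HasDerivWithinAt (fun τ ↦ X' τ ^ 2 + 2 * k * Real.log (X τ)) 0 s t := by
  have hX : X t ≠ 0 := (h.pos t ht).ne'
  refine (((h.hasDerivWithinAt_velocity t ht).pow 2).add
    (((h.hasDerivWithinAt t ht).log hX).const_mul (2 * k))).congr_deriv ?_
  field_simp
  ring

theorem velocity_sq_eq (h : IsPositiveSolutionOn k X X' s) (hs : Convex ℝ s)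
    (ht₀ : t₀ ∈ s) (ht : t ∈ s) :
    X' t ^ 2 = X' t₀ ^ 2 - 2 * k * Real.log (X t / X t₀) := by
  have energy_eq : X' t ^ 2 + 2 * k * Real.log (X t) = X' t₀ ^ 2 + 2 * k * Real.log (X t₀) := by
    have := hs.norm_image_sub_le_of_norm_hasDerivWithin_le (C := 0)
      (fun _ hτ ↦ h.hasDerivWithinAt_energy hτ) (fun _ _ ↦ norm_zero.le) ht₀ ht
    rwa [zero_mul, norm_le_zero_iff, sub_eq_zero] at this
  rw [Real.log_div (h.pos t ht).ne' (h.pos t₀ ht₀).ne']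
  linarith

theorem le_mul_exp (h : IsPositiveSolutionOn k X X' s) (hk : 0 < k) (hs : Convex ℝ s)
    (ht₀ : t₀ ∈ s) (ht : t ∈ s) :
    X t ≤ X t₀ * Real.exp (X' t₀ ^ 2 / (2 * k)) := by
  have hX₀ := h.pos t₀ ht₀
  have log_le : Real.log (X t / X t₀) ≤ X' t₀ ^ 2 / (2 * k) := by
    rw [le_div_iff₀' (by positivity)]
    linarith [h.velocity_sq_eq hs ht₀ ht, sq_nonneg (X' t)]
  rwa [← div_le_iff₀' hX₀, ← Real.log_le_iff_le_exp (div_pos (h.pos t ht) hX₀)]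

end IsPositiveSolutionOn

theorem not_isPositiveSolutionOn_Ici {k : ℝ} (hk : 0 < k) (a : ℝ) (X X' : ℝ → ℝ) :
    ¬ IsPositiveSolutionOn k X X' (Ici a) := by
  intro h
  obtain ⟨M, hM⟩ : ∃ M, ∀ t ∈ Ici a, X t ≤ M :=
    ⟨_, fun _ ht ↦ h.le_mul_exp hk (convex_Ici a) self_mem_Ici ht⟩
  have hM_pos : 0 < M := (h.pos a self_mem_Ici).trans_le (hM a self_mem_Ici)
  have acceleration_le : ∀ t ∈ Ici a, -k / X t ≤ -k / M := fun t ht ↦ by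
    simp only [neg_div]
    exact neg_le_neg (div_le_div_of_nonneg_left hk.le (h.pos t ht) (hM t ht))
  have velocity_tendsto : Tendsto X' atTop atBot :=
    tendsto_atBot_of_eventually_hasDerivAt_le (div_neg_of_neg_of_pos (neg_lt_zero.2 hk) hM_pos)
      ((eventually_gt_atTop a).mono fun t ht ↦
        (h.hasDerivWithinAt_velocity t ht.le).hasDerivAt (Ici_mem_nhds ht))
      ((eventually_ge_atTop a).mono acceleration_le)
  have position_tendsto : Tendsto X atTop atBot :=
    tendsto_atBot_of_eventually_hasDerivAt_le neg_one_lt_zero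
      ((eventually_gt_atTop a).mono fun t ht ↦
        (h.hasDerivWithinAt t ht.le).hasDerivAt (Ici_mem_nhds ht))
      (velocity_tendsto.eventually_le_atBot (-1))
  obtain ⟨t, hXt, hat⟩ :=
    ((position_tendsto.eventually_le_atBot 0).and (eventually_ge_atTop a)).exists
  exact (h.pos t hat).not_ge hXt

/-- Two-dimensional attractive case: any positive solution of `X'' = -μ m₀ / X` on `[0,T)`
with `X(0) = R`, `X'(0) = v₀` satisfies `X(t) ≤ R exp(v₀²/(2μ m₀))`, and there is no such
positive solution global on `[0,∞)`. -/
theorem stmt6 (μ : ℝ) (hμ : 0 < μ) (m₀ : ℝ) (hm₀ : 0 < m₀) (R : ℝ) (hR : 0 < R) (v₀ : ℝ) :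
    (∀ T : ℝ, 0 < T → ∀ X X' : ℝ → ℝ,
        (∀ t ∈ Ico (0:ℝ) T, 0 < X t) →
        (∀ t ∈ Ico (0:ℝ) T, HasDerivWithinAt X (X' t) (Ico 0 T) t) →
        (∀ t ∈ Ico (0:ℝ) T, HasDerivWithinAt X' (-μ * m₀ / X t) (Ico 0 T) t) →
        X 0 = R → X' 0 = v₀ →
        ∀ t ∈ Ico (0:ℝ) T, X t ≤ R * Real.exp (v₀ ^ 2 / (2 * μ * m₀))) ∧
    (¬ ∃ X X' : ℝ → ℝ,
        (∀ t ∈ Ici (0:ℝ), 0 < X t) ∧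
        (∀ t ∈ Ici (0:ℝ), HasDerivWithinAt X (X' t) (Ici 0) t) ∧
        (∀ t ∈ Ici (0:ℝ), HasDerivWithinAt X' (-μ * m₀ / X t) (Ici 0) t) ∧
        X 0 = R ∧ X' 0 = v₀) := by
  have hk : 0 < μ * m₀ := mul_pos hμ hm₀
  simp only [neg_mul, mul_assoc 2 μ m₀]
  constructor
  · rintro T hT X X' hpos hX hX' rfl rfl t ht
    have sol : IsPositiveSolutionOn (μ * m₀) X X' (Ico 0 T) := ⟨hpos, hX, hX'⟩
    exact sol.le_mul_exp hk (convex_Ico 0 T) (left_mem_Ico.2 hT) ht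
  · rintro ⟨X, X', hpos, hX, hX', -, -⟩
    exact not_isPositiveSolutionOn_Ici hk 0 X X' ⟨hpos, hX, hX'⟩
end

section
/- Let n ≥ 3, μ ∈ ℝ, m₀ ≥ 0, R > 0, and v₀ > 0, and set A := 2μ m₀/(n−2) and C := v₀² − A/R^{n−2}. Suppose C > 0. If X : [0,∞) → (0,∞) is twice continuously differentiable with X''(t) = −μ m₀ / X(t)^{n−1} for all t ≥ 0, X(0) = R, and X'(0) = v₀, then X(t) → ∞, X'(t) → √C, and X(t)/t → √C as t → ∞. -/
open Set Filter

/-!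
The energy `X' ^ 2 - A / X ^ (n - 2)` is conserved and equals `C`. As long as `X' ≥ 0`, the
trajectory stays in `[R, ∞)`, where `C + A / x ^ (n - 2)` lies between its value `v₀ ^ 2` at `R`
and its limit `C` at infinity. Hence `X' ^ 2` is bounded below by a positive constant up to the
first zero of `X'`, so there is no such zero and `X` grows at least linearly. The potential
therefore vanishes along the trajectory, which gives `X' → √C`, and a function whose derivative
converges to `√C` is asymptotic to `√C * t`.
-/

open Asymptotics
open scoped Topology

section AsymptoticSlope

variable {E : Type*} [NormedAddCommGroup E] [NormedSpace ℝ E]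

theorem isLittleO_id_of_tendsto_deriv_zero {g g' : ℝ → E}
    (hg : ∀ᶠ t in atTop, HasDerivAt g (g' t) t) (hg' : Tendsto g' atTop (𝓝 0)) :
    g =o[atTop] (id : ℝ → ℝ) := by
  refine isLittleO_iff.2 fun ε hε ↦ ?_
  have hsmall : ∀ᶠ t in atTop, ‖g' t‖ ≤ ε / 2 :=
    hg'.norm.eventually_le_const (by simpa using half_pos hε)
  obtain ⟨T, hT⟩ := eventually_atTop.1 ((hg.and hsmall).and (eventually_ge_atTop 0))
  have hT₀ : 0 ≤ T := (hT T le_rfl).2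
  have hconst : ∀ᶠ t in atTop, ‖g T‖ ≤ ε / 2 * t :=
    (tendsto_id.const_mul_atTop (half_pos hε)).eventually_ge_atTop _
  filter_upwards [hconst, eventually_ge_atTop T] with t hgT hTt
  have hmean : ‖g t - g T‖ ≤ ε / 2 * (t - T) :=
    norm_image_sub_le_of_norm_deriv_le_segment'
      (fun s hs ↦ (hT s hs.1).1.1.hasDerivWithinAt) (fun s hs ↦ (hT s hs.1).1.2)
      t (right_mem_Icc.2 hTt)
  calc ‖g t‖ ≤ ‖g T‖ + ‖g t - g T‖ := norm_le_norm_add_norm_sub' _ _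
    _ ≤ ε / 2 * t + ε / 2 * (t - T) := add_le_add hgT hmean
    _ ≤ ε * t := by linarith [mul_nonneg hε.le hT₀]
    _ = ε * ‖id t‖ := by rw [id, Real.norm_of_nonneg (hT₀.trans hTt)]

theorem tendsto_inv_smul_of_tendsto_deriv {f f' : ℝ → E} {L : E}
    (hf : ∀ᶠ t in atTop, HasDerivAt f (f' t) t) (hf' : Tendsto f' atTop (𝓝 L)) :
    Tendsto (fun t ↦ t⁻¹ • f t) atTop (𝓝 L) := by
  have herror : (fun t ↦ f t - t • L) =o[atTop] (id : ℝ → ℝ) := by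
    refine isLittleO_id_of_tendsto_deriv_zero (g' := fun t ↦ f' t - L) ?_
      (tendsto_sub_nhds_zero_iff.2 hf')
    filter_upwards [hf] with t ht
    simpa using ht.fun_sub ((hasDerivAt_id t).smul_const L)
  refine tendsto_sub_nhds_zero_iff.1 (herror.tendsto_inv_smul_nhds_zero.congr' ?_)
  filter_upwards [eventually_ne_atTop 0] with t ht
  simp only [id, smul_sub, inv_smul_smul₀ ht]

end AsymptoticSlope

theorem exists_first_zero_of_pos_of_nonpos {f : ℝ → ℝ} {a b : ℝ} (hab : a ≤ b)
    (hf : ContinuousOn f (Icc a b)) (ha : 0 < f a) (hb : f b ≤ 0) :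
    ∃ s ∈ Icc a b, f s = 0 ∧ ∀ r ∈ Ico a s, 0 < f r := by
  have hcompact : IsCompact (Icc a b ∩ f ⁻¹' Iic 0) :=
    isCompact_Icc.of_isClosed_subset
      (hf.preimage_isClosed_of_isClosed isClosed_Icc isClosed_Iic) inter_subset_left
  obtain ⟨s, ⟨hs, hfs⟩, hleast⟩ := hcompact.exists_isLeast ⟨b, right_mem_Icc.2 hab, hb⟩
  have hpos : ∀ r ∈ Ico a s, 0 < f r := fun r hr ↦ by
    by_contra! hfr
    exact (hleast ⟨⟨hr.1, hr.2.le.trans hs.2⟩, hfr⟩).not_gt hr.2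
  obtain ⟨z, hz, hfz⟩ := intermediate_value_Icc' hs.1 (hf.mono (Icc_subset_Icc_right hs.2))
    ⟨hfs, ha.le⟩
  have hzs : z = s := hz.2.antisymm (hleast ⟨⟨hz.1, hz.2.trans hs.2⟩, hfz.le⟩)
  exact ⟨s, hs, hzs ▸ hfz, hpos⟩

theorem add_mul_sub_le_of_le_hasDerivWithinAt {X V : ℝ → ℝ} {a b c : ℝ} (hab : a ≤ b)
    (hX : ∀ t ∈ Icc a b, HasDerivWithinAt X (V t) (Icc a b) t) (hc : ∀ t ∈ Ico a b, c ≤ V t) :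
    X a + c * (b - a) ≤ X b := by
  have hline (t : ℝ) : HasDerivAt (fun t ↦ X a + c * (t - a)) c t := by
    simpa using (((hasDerivAt_id t).sub_const a).const_mul c).const_add (X a)
  exact image_le_of_deriv_right_le_deriv_boundary
    (fun t _ ↦ (hline t).continuousAt.continuousWithinAt)
    (fun t _ ↦ (hline t).hasDerivWithinAt) (by simp)
    (fun t ht ↦ (hX t ht).continuousWithinAt)
    (fun t ht ↦ (hX t (Ico_subset_Icc_self ht)).mono_of_mem_nhdsWithin
      (Icc_mem_nhdsGE_of_mem ht))
    hc (right_mem_Icc.2 hab)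

section Trajectory

variable {X V : ℝ → ℝ} {a c : ℝ}

theorem velocity_pos_of_sq_pos_of_le (hX : ∀ t ∈ Ici a, HasDerivWithinAt X (V t) (Ici a) t)
    (hV : ContinuousOn V (Ici a)) (hVa : 0 < V a)
    (hsq : ∀ t ∈ Ici a, X a ≤ X t → 0 < V t ^ 2) {t : ℝ} (ht : a ≤ t) : 0 < V t := by
  by_contra! hVt
  obtain ⟨s, hs, hVs, hVpos⟩ :=
    exists_first_zero_of_pos_of_nonpos ht (hV.mono Icc_subset_Ici_self) hVa hVt
  have hXs : X a ≤ X s := by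
    simpa using add_mul_sub_le_of_le_hasDerivWithinAt hs.1
      (fun r hr ↦ (hX r hr.1).mono Icc_subset_Ici_self) (fun r hr ↦ (hVpos r hr).le)
  simpa [hVs] using hsq s hs.1 hXs

theorem sqrt_le_velocity_of_le_sq (hX : ∀ t ∈ Ici a, HasDerivWithinAt X (V t) (Ici a) t)
    (hV : ContinuousOn V (Ici a)) (hVa : 0 < V a) (hc : 0 < c)
    (hsq : ∀ t ∈ Ici a, X a ≤ X t → c ≤ V t ^ 2) {t : ℝ} (ht : a ≤ t) : √c ≤ V t := by
  have hVpos {s : ℝ} (hs : a ≤ s) : 0 < V s :=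
    velocity_pos_of_sq_pos_of_le hX hV hVa (fun r hr hXr ↦ hc.trans_le (hsq r hr hXr)) hs
  have hXt : X a ≤ X t := by
    simpa using add_mul_sub_le_of_le_hasDerivWithinAt ht
      (fun r hr ↦ (hX r hr.1).mono Icc_subset_Ici_self) (fun r hr ↦ (hVpos hr.1).le)
  exact Real.sqrt_le_iff.2 ⟨(hVpos ht).le, hsq t ht hXt⟩

theorem tendsto_atTop_of_le_velocity (hX : ∀ t ∈ Ici a, HasDerivWithinAt X (V t) (Ici a) t)
    (hc : 0 < c) (hcV : ∀ t ∈ Ici a, c ≤ V t) : Tendsto X atTop atTop := by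
  have hline : Tendsto (fun t ↦ X a + c * (t - a)) atTop atTop :=
    tendsto_atTop_add_const_left _ _
      ((tendsto_atTop_add_const_right _ (-a) tendsto_id).const_mul_atTop hc)
  refine tendsto_atTop_mono' _ ?_ hline
  filter_upwards [eventually_ge_atTop a] with t ht
  exact add_mul_sub_le_of_le_hasDerivWithinAt ht
    (fun r hr ↦ (hX r hr.1).mono Icc_subset_Ici_self) (fun r hr ↦ hcV r hr.1)

theorem tendsto_velocity_of_sq_eq {g : ℝ → ℝ} {C : ℝ} (hX : Tendsto X atTop atTop)
    (hV : ∀ t ∈ Ici a, 0 ≤ V t) (hsq : ∀ t ∈ Ici a, V t ^ 2 = g (X t))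
    (hg : Tendsto g atTop (𝓝 C)) : Tendsto V atTop (𝓝 √C) := by
  refine (hg.comp hX).sqrt.congr' ?_
  filter_upwards [eventually_ge_atTop a] with t ht
  rw [Function.comp_apply, ← hsq t ht, Real.sqrt_sq (hV t ht)]

theorem tendsto_div_of_tendsto_velocity {L : ℝ}
    (hX : ∀ t ∈ Ici a, HasDerivWithinAt X (V t) (Ici a) t) (hV : Tendsto V atTop (𝓝 L)) :
    Tendsto (fun t ↦ X t / t) atTop (𝓝 L) := by
  have hderiv : ∀ᶠ t in atTop, HasDerivAt X (V t) t := by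
    filter_upwards [eventually_gt_atTop a] with t ht
    exact (hX t ht.le).hasDerivAt (Ici_mem_nhds ht)
  simpa only [smul_eq_mul, inv_mul_eq_div] using tendsto_inv_smul_of_tendsto_deriv hderiv hV

theorem velocity_sq_sub_potential_eq {f Φ : ℝ → ℝ}
    (hX : ∀ t ∈ Ici a, HasDerivWithinAt X (V t) (Ici a) t)
    (hV : ∀ t ∈ Ici a, HasDerivWithinAt V (f (X t)) (Ici a) t)
    (hΦ : ∀ t ∈ Ici a, HasDerivAt Φ (2 * f (X t)) (X t)) {t : ℝ} (ht : a ≤ t) :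
    V t ^ 2 - Φ (X t) = V a ^ 2 - Φ (X a) := by
  have hderiv : ∀ s ∈ Ici a, HasDerivWithinAt (fun s ↦ V s ^ 2 - Φ (X s)) 0 (Ici a) s :=
    fun s hs ↦ (((hV s hs).fun_pow 2).sub ((hΦ s hs).comp_hasDerivWithinAt s (hX s hs))).congr_deriv
      (by ring)
  exact constant_of_has_deriv_right_zero
    (fun s hs ↦ (hderiv s hs.1).continuousWithinAt.mono Icc_subset_Ici_self)
    (fun s hs ↦ (hderiv s hs.1).mono (Ici_subset_Ici.2 hs.1)) t (right_mem_Icc.2 ht)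

end Trajectory

section PowerPotential

variable {x R : ℝ}

theorem hasDerivAt_const_div_pow (A : ℝ) (k : ℕ) (hx : x ≠ 0) :
    HasDerivAt (fun y ↦ A / y ^ k) (-(k * A) / x ^ (k + 1)) x := by
  have hexp : (-k - 1 : ℤ) = -((k + 1 : ℕ) : ℤ) := by push_cast; ring
  have hzpow := (hasDerivAt_zpow (-k : ℤ) x (Or.inl hx)).const_mul A
  simp only [hexp, zpow_neg, zpow_natCast, ← div_eq_mul_inv] at hzpow
  exact hzpow.congr_deriv (by push_cast; ring)

theorem min_le_add_div_pow (A C : ℝ) (k : ℕ) (hR : 0 < R) (hRx : R ≤ x) :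
    min C (C + A / R ^ k) ≤ C + A / x ^ k := by
  have hx : 0 < x := hR.trans_le hRx
  rcases le_total 0 A with hA | hA
  · exact min_le_of_left_le (le_add_of_nonneg_right (by positivity))
  · have hinv : (x ^ k)⁻¹ ≤ (R ^ k)⁻¹ := by gcongr
    simpa only [div_eq_mul_inv] using
      min_le_of_right_le (add_le_add_right (mul_le_mul_of_nonpos_left hinv hA) C)

theorem velocity_sq_eq_of_inverse_power_force {X V : ℝ → ℝ} {a A κ : ℝ} {k : ℕ}
    (hA : k * A = -(2 * κ)) (hpos : ∀ t ∈ Ici a, 0 < X t)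
    (hX : ∀ t ∈ Ici a, HasDerivWithinAt X (V t) (Ici a) t)
    (hV : ∀ t ∈ Ici a, HasDerivWithinAt V (κ / X t ^ (k + 1)) (Ici a) t) {t : ℝ} (ht : a ≤ t) :
    V t ^ 2 = V a ^ 2 - A / X a ^ k + A / X t ^ k := by
  have hpotential : ∀ s ∈ Ici a, HasDerivAt (fun x ↦ A / x ^ k) (2 * (κ / X s ^ (k + 1))) (X s) :=
    fun s hs ↦ (hasDerivAt_const_div_pow A k (hpos s hs).ne').congr_deriv (by rw [hA]; ring)
  exact sub_eq_iff_eq_add.1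
    (velocity_sq_sub_potential_eq (f := fun x ↦ κ / x ^ (k + 1)) hX hV hpotential ht)

end PowerPotential

/-- Above the critical threshold (`C > 0`, `v₀ > 0`) the global characteristic of the radial
Euler–Poisson system grows linearly: `X(t) → ∞`, `X'(t) → √C` and `X(t)/t → √C`. -/
theorem stmt9 (n : ℕ) (hn : 3 ≤ n) (μ : ℝ) (m₀ : ℝ) (hm₀ : 0 ≤ m₀)
    (R : ℝ) (hR : 0 < R) (v₀ : ℝ) (hv₀ : 0 < v₀) (A C : ℝ)
    (hA : A = 2 * μ * m₀ / ((n : ℝ) - 2)) (hC : C = v₀ ^ 2 - A / R ^ (n - 2))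
    (hCpos : 0 < C)
    (X X' : ℝ → ℝ)
    (hpos : ∀ t ∈ Ici (0:ℝ), 0 < X t)
    (hX : ∀ t ∈ Ici (0:ℝ), HasDerivWithinAt X (X' t) (Ici 0) t)
    (hX' : ∀ t ∈ Ici (0:ℝ), HasDerivWithinAt X' (-μ * m₀ / X t ^ (n - 1)) (Ici 0) t)
    (hX0 : X 0 = R) (hX'0 : X' 0 = v₀) :
    Tendsto X atTop atTop ∧
    Tendsto X' atTop (nhds (Real.sqrt C)) ∧
    Tendsto (fun t => X t / t) atTop (nhds (Real.sqrt C)) := by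
  obtain ⟨k, hk, rfl⟩ : ∃ k, k ≠ 0 ∧ n = k + 2 := ⟨n - 2, by omega, by omega⟩
  have hkA : k * A = -(2 * (-μ * m₀)) := by
    have hk' : (k : ℝ) ≠ 0 := Nat.cast_ne_zero.2 hk
    rw [hA, Nat.cast_add, Nat.cast_ofNat, add_sub_cancel_right, mul_div_cancel₀ _ hk']
    ring
  have henergy (t : ℝ) (ht : t ∈ Ici 0) : X' t ^ 2 = C + A / X t ^ k := by
    rw [velocity_sq_eq_of_inverse_power_force hkA hpos hX hX' ht, hX0, hX'0, hC, Nat.add_sub_cancel]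
  have hfloor : 0 < min C (v₀ ^ 2) := lt_min hCpos (pow_pos hv₀ 2)
  have hspeed (t : ℝ) (ht : t ∈ Ici 0) : √(min C (v₀ ^ 2)) ≤ X' t := by
    refine sqrt_le_velocity_of_le_sq hX (fun s hs ↦ (hX' s hs).continuousWithinAt)
      (hX'0 ▸ hv₀) hfloor (fun s hs hXs ↦ ?_) ht
    rw [henergy s hs, ← hX'0, henergy 0 self_mem_Ici]
    exact min_le_add_div_pow A C k (hX0 ▸ hR) hXs
  have hXtop : Tendsto X atTop atTop :=
    tendsto_atTop_of_le_velocity hX (Real.sqrt_pos.2 hfloor) hspeed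
  have hlimit : Tendsto (fun x : ℝ ↦ C + A / x ^ k) atTop (𝓝 C) := by
    simpa using ((tendsto_pow_atTop hk).const_div_atTop A).const_add C
  have hX'lim : Tendsto X' atTop (𝓝 √C) :=
    tendsto_velocity_of_sq_eq hXtop (fun t ht ↦ (Real.sqrt_nonneg _).trans (hspeed t ht))
      henergy hlimit
  exact ⟨hXtop, hX'lim, tendsto_div_of_tendsto_velocity hX hX'lim⟩
end

section
/- Let n ≥ 1 be an integer, t ≥ 0, let v₀ : (0,∞) → ℝ be differentiable, and let ρ₀ : (0,∞) → ℝ. Define F(R) := n v₀(R)/(2R), G(R) := v₀'(R) + (n−2) v₀(R)/(2R), and X(t,R) := R·(1 + F(R) t)^{2/n}. Then for every R > 0 with 1 + F(R) t > 0 and 1 + G(R) t ≠ 0, one has ρ₀(R)·R^{n−1} / (X(t,R)^{n−1} · ∂_R X(t,R)) = ρ₀(R)·(1 + F(R) t)^{−1}·(1 + G(R) t)^{−1}. -/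
/-! Write `a = 1 + F t`, so that the flow is `X = R a ^ (2 / n)`. The functions `F` and `G` are
tied by `G = F + (2 / n) R F'`, hence `∂_R X = a ^ (2 / n - 1) (1 + G t)`. In `X ^ (n - 1) ∂_R X`
the exponents of `a` add up to `(2 / n) (n - 1) + (2 / n - 1) = 1`, leaving
`R ^ (n - 1) (1 + F t) (1 + G t)`. -/

theorem hasDerivAt_id_mul_rpow {a : ℝ → ℝ} {a' R : ℝ} (p : ℝ) (ha : HasDerivAt a a' R)
    (ha₀ : a R ≠ 0) :
    HasDerivAt (fun r ↦ r * a r ^ p) (a R ^ (p - 1) * (a R + p * R * a')) R := by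
  have hpow : a R ^ p = a R ^ (p - 1) * a R := by
    rw [Real.rpow_sub_one ha₀, div_mul_cancel₀ _ ha₀]
  refine ((hasDerivAt_id' R).mul (ha.rpow_const (p := p) (.inl ha₀))).congr_deriv ?_
  rw [hpow]
  ring

theorem mul_rpow_two_div_rpow_mul_rpow {d R a : ℝ} (hd : d ≠ 0) (hR : 0 ≤ R) (ha : 0 < a) :
    (R * a ^ (2 / d)) ^ (d - 1) * a ^ (2 / d - 1) = R ^ (d - 1) * a := by
  have hexp : 2 / d * (d - 1) + (2 / d - 1) = 1 := by
    field_simp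
    ring
  rw [Real.mul_rpow hR (Real.rpow_nonneg ha.le _), ← Real.rpow_mul ha.le, mul_assoc,
    ← Real.rpow_add ha, hexp, Real.rpow_one]

theorem rpow_mul_deriv_id_mul_rpow_two_div {a : ℝ → ℝ} {a' d R : ℝ} (hd : d ≠ 0) (hR : 0 ≤ R)
    (ha : HasDerivAt a a' R) (ha₀ : 0 < a R) :
    (R * a R ^ (2 / d)) ^ (d - 1) * deriv (fun r ↦ r * a r ^ (2 / d)) R =
      R ^ (d - 1) * a R * (a R + 2 / d * R * a') := by
  rw [(hasDerivAt_id_mul_rpow (2 / d) ha ha₀.ne').deriv, ← mul_assoc,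
    mul_rpow_two_div_rpow_mul_rpow hd hR ha₀]

theorem hasDerivAt_const_mul_div_two_mul {v : ℝ → ℝ} {v' R : ℝ} (d : ℝ) (hv : HasDerivAt v v' R)
    (hR : R ≠ 0) :
    HasDerivAt (fun r ↦ d * v r / (2 * r)) (d / (2 * R) * (v' - v R / R)) R := by
  refine ((hv.const_mul d).div ((hasDerivAt_id' R).const_mul 2)
    (mul_ne_zero two_ne_zero hR)).congr_deriv ?_
  field_simp

theorem stmt12_general {d t R : ℝ} (hd : d ≠ 0) (hR : 0 < R) {v₀ : ℝ → ℝ}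
    (hv : DifferentiableAt ℝ v₀ R) (ρ₀ : ℝ → ℝ) {F G X : ℝ → ℝ}
    (hF : ∀ r, F r = d * v₀ r / (2 * r))
    (hG : ∀ r, G r = deriv v₀ r + (d - 2) * v₀ r / (2 * r))
    (hX : ∀ r, X r = r * (1 + F r * t) ^ (2 / d))
    (hFt : 0 < 1 + F R * t) (hGt : 1 + G R * t ≠ 0) :
    ρ₀ R * R ^ (d - 1) / (X R ^ (d - 1) * deriv X R) =
      ρ₀ R * (1 + F R * t)⁻¹ * (1 + G R * t)⁻¹ := by
  set F' := d / (2 * R) * (deriv v₀ R - v₀ R / R) with hF'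
  have hasDerivAt_F : HasDerivAt F F' R := by
    rw [funext hF]
    exact hasDerivAt_const_mul_div_two_mul d hv.hasDerivAt hR.ne'
  have G_eq : G R = F R + 2 / d * R * F' := by
    rw [hG, hF, hF']
    field_simp
    ring
  have jacobian : X R ^ (d - 1) * deriv X R =
      R ^ (d - 1) * (1 + F R * t) * (1 + G R * t) := by
    rw [funext hX, rpow_mul_deriv_id_mul_rpow_two_div hd hR.le
      ((hasDerivAt_F.mul_const t).const_add 1) hFt, G_eq]
    ring
  have hRpow : R ^ (d - 1) ≠ 0 := (Real.rpow_pos_of_pos hR _).ne'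
  rw [jacobian, div_eq_iff (mul_ne_zero (mul_ne_zero hRpow hFt.ne') hGt)]
  generalize 1 + F R * t = a, 1 + G R * t = b at hFt hGt ⊢
  field_simp

/-- Lagrangian density formula: for the characteristic flow `X(t,R) = R (1 + F(R)t)^{2/n}`,
the transported density `ρ₀(R) R^{n-1} / (X^{n-1} ∂_R X)` equals
`ρ₀(R) (1 + F(R)t)⁻¹ (1 + G(R)t)⁻¹`. -/
theorem stmt12 (n : ℕ) (hn : 1 ≤ n) (t : ℝ) (ht : 0 ≤ t)
    (v₀ : ℝ → ℝ) (hv : ∀ R > (0:ℝ), DifferentiableAt ℝ v₀ R)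
    (ρ₀ : ℝ → ℝ)
    (F G X : ℝ → ℝ)
    (hF : ∀ R, F R = (n : ℝ) * v₀ R / (2 * R))
    (hG : ∀ R, G R = deriv v₀ R + ((n : ℝ) - 2) * v₀ R / (2 * R))
    (hX : ∀ R, X R = R * (1 + F R * t) ^ ((2:ℝ) / n)) :
    ∀ R > (0:ℝ), 0 < 1 + F R * t → 1 + G R * t ≠ 0 →
      ρ₀ R * R ^ (n - 1) / (X R ^ (n - 1) * deriv X R)
        = ρ₀ R * (1 + F R * t)⁻¹ * (1 + G R * t)⁻¹ := by
  intro R hR hFt hGt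
  simpa only [← Nat.cast_pred hn, Real.rpow_natCast] using
    stmt12_general (Nat.cast_ne_zero.2 (Nat.ne_zero_of_lt hn)) hR (hv R hR) ρ₀ hF hG hX hFt hGt
end

section
/- Let n ≥ 1 be an integer, t ≥ 0, let v₀ : (0,∞) → ℝ be differentiable, and let A₀ : (0,∞) → ℂ. Define F(R) := n v₀(R)/(2R), G(R) := v₀'(R) + (n−2) v₀(R)/(2R), X(t,R) := R·(1 + F(R) t)^{2/n}, and a(t,R) := A₀(R)·(1 + F(R) t)^{−1/2}·(1 + G(R) t)^{−1/2}. Then for every R > 0 with 1 + F(R) t > 0 and 1 + G(R) t > 0, one has |a(t,R)|²·X(t,R)^{n−1}·∂_R X(t,R) = |A₀(R)|²·R^{n−1}. Consequently, if these positivity conditions hold for all R > 0, then ∫₀^∞ |a(t,R)|² X(t,R)^{n−1} ∂_R X(t,R) dR = ∫₀^∞ |A₀(R)|² R^{n−1} dR. -/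
open MeasureTheory

/-!
Write `P = 1 + F t` and `Q = 1 + G t`. The rates are related by `G = F + (2 / n) R F'`, and
therefore `∂_R X = P ^ (2 / n - 1) Q`. Since also `X ^ (n - 1) = R ^ (n - 1) P ^ (2 - 2 / n)`, the
flow multiplies the radial volume density `R ^ (n - 1)` by exactly `P Q`, while the amplitude
satisfies `|a|² = |A₀|² / (P Q)`.
-/

/-- The rate `F(R) = ν v₀(R) / (2R)` of the characteristic flow in dimension `ν`. The dimension is
allowed to be any real number. -/
noncomputable def tangentialRate (ν : ℝ) (v₀ : ℝ → ℝ) (R : ℝ) : ℝ :=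
  ν * v₀ R / (2 * R)

/-- The rate `G(R) = v₀'(R) + (ν - 2) v₀(R) / (2R)`, which governs the radial stretching `∂_R X` of
the characteristic flow in dimension `ν`. -/
noncomputable def radialRate (ν : ℝ) (v₀ : ℝ → ℝ) (R : ℝ) : ℝ :=
  deriv v₀ R + (ν - 2) * v₀ R / (2 * R)

/-- The position `X(t, R) = R (1 + F(R) t) ^ (2 / ν)` at time `t` of the characteristic issued from
radius `R`. -/
noncomputable def characteristicFlow (ν : ℝ) (v₀ : ℝ → ℝ) (t R : ℝ) : ℝ :=
  R * (1 + tangentialRate ν v₀ R * t) ^ (2 / ν)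

/-- The amplitude `a(t, R) = (1 + F(R) t) ^ (-1/2) (1 + G(R) t) ^ (-1/2) A₀(R)` in the Lagrangian
coordinate `R`, for initial data `A₀` with values in a real vector space. -/
noncomputable def lagrangianAmplitude {E : Type*} [SMul ℝ E] (ν : ℝ) (v₀ : ℝ → ℝ) (A₀ : ℝ → E)
    (t R : ℝ) : E :=
  ((1 + tangentialRate ν v₀ R * t) ^ (-(1 : ℝ) / 2) *
    (1 + radialRate ν v₀ R * t) ^ (-(1 : ℝ) / 2)) • A₀ R

section Flow

variable {v₀ : ℝ → ℝ} {t R : ℝ}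

theorem hasDerivAt_tangentialRate (ν : ℝ) (hv : DifferentiableAt ℝ v₀ R) (hR : R ≠ 0) :
    HasDerivAt (tangentialRate ν v₀)
      (ν / (2 * R) * (radialRate ν v₀ R - tangentialRate ν v₀ R)) R := by
  have quotient_rule := (hv.hasDerivAt.const_mul ν).fun_div
    ((hasDerivAt_id' R).const_mul 2) (mul_ne_zero two_ne_zero hR)
  refine quotient_rule.congr_deriv ?_
  unfold radialRate tangentialRate
  field_simp
  ring

theorem hasDerivAt_characteristicFlow {ν : ℝ} (hν : ν ≠ 0) (hv : DifferentiableAt ℝ v₀ R)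
    (hR : R ≠ 0) (hP : 1 + tangentialRate ν v₀ R * t ≠ 0) :
    HasDerivAt (characteristicFlow ν v₀ t)
      ((1 + tangentialRate ν v₀ R * t) ^ (2 / ν - 1) * (1 + radialRate ν v₀ R * t)) R := by
  have product_rule := (hasDerivAt_id' R).fun_mul
    ((((hasDerivAt_tangentialRate ν hv hR).mul_const t).const_add 1).rpow_const
      (p := 2 / ν) (Or.inl hP))
  refine product_rule.congr_deriv ?_
  rw [Real.rpow_sub_one hP]
  field_simp
  ring

theorem rpow_two_div_pow_pred_mul_rpow {n : ℕ} (hn : n ≠ 0) {P : ℝ} (hP : 0 < P) :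
    (P ^ (2 / n : ℝ)) ^ (n - 1) * P ^ (2 / n - 1 : ℝ) = P := by
  have hn' : (n : ℝ) ≠ 0 := Nat.cast_ne_zero.mpr hn
  calc (P ^ (2 / n : ℝ)) ^ (n - 1) * P ^ (2 / n - 1 : ℝ)
      = (P ^ (2 / n : ℝ)) ^ n / P := by
        rw [Real.rpow_sub_one hP.ne', ← mul_div_assoc, pow_sub_one_mul hn]
    _ = P ^ 2 / P := by
        rw [← Real.rpow_mul_natCast hP.le, div_mul_cancel₀ _ hn', Real.rpow_two]
    _ = P := by rw [sq, mul_div_cancel_right₀ _ hP.ne']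

theorem characteristicFlow_pow_mul_deriv {n : ℕ} (hn : n ≠ 0) (hv : DifferentiableAt ℝ v₀ R)
    (hR : R ≠ 0) (hP : 0 < 1 + tangentialRate n v₀ R * t) :
    characteristicFlow n v₀ t R ^ (n - 1) * deriv (characteristicFlow n v₀ t) R =
      R ^ (n - 1) * ((1 + tangentialRate n v₀ R * t) * (1 + radialRate n v₀ R * t)) := by
  rw [(hasDerivAt_characteristicFlow (Nat.cast_ne_zero.mpr hn) hv hR hP.ne').deriv,
    characteristicFlow, mul_pow, mul_assoc, ← mul_assoc (_ ^ (n - 1)) (_ ^ (2 / n - 1 : ℝ)),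
    rpow_two_div_pow_pred_mul_rpow hn hP]

end Flow

section Amplitude

variable {E : Type*} [SeminormedAddCommGroup E] [NormedSpace ℝ E] {v₀ : ℝ → ℝ} {t R : ℝ}

theorem sq_rpow_neg_one_div_two {P : ℝ} (hP : 0 ≤ P) : (P ^ (-(1 : ℝ) / 2)) ^ 2 = P⁻¹ := by
  rw [← Real.rpow_mul_natCast hP, Nat.cast_ofNat, div_mul_cancel₀ _ two_ne_zero, Real.rpow_neg_one]

theorem norm_lagrangianAmplitude_sq {ν : ℝ} (A₀ : ℝ → E)
    (hP : 0 ≤ 1 + tangentialRate ν v₀ R * t) (hQ : 0 ≤ 1 + radialRate ν v₀ R * t) :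
    ‖lagrangianAmplitude ν v₀ A₀ t R‖ ^ 2 =
      ‖A₀ R‖ ^ 2 / ((1 + tangentialRate ν v₀ R * t) * (1 + radialRate ν v₀ R * t)) := by
  rw [lagrangianAmplitude, norm_smul, mul_pow, Real.norm_eq_abs, sq_abs, mul_pow,
    sq_rpow_neg_one_div_two hP, sq_rpow_neg_one_div_two hQ, ← mul_inv, inv_mul_eq_div]

theorem norm_lagrangianAmplitude_sq_mul_characteristicFlow_pow_mul_deriv {n : ℕ} (hn : n ≠ 0)
    (hv : DifferentiableAt ℝ v₀ R) (A₀ : ℝ → E) (hR : R ≠ 0)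
    (hP : 0 < 1 + tangentialRate n v₀ R * t) (hQ : 0 < 1 + radialRate n v₀ R * t) :
    ‖lagrangianAmplitude n v₀ A₀ t R‖ ^ 2 * characteristicFlow n v₀ t R ^ (n - 1) *
      deriv (characteristicFlow n v₀ t) R = ‖A₀ R‖ ^ 2 * R ^ (n - 1) := by
  rw [mul_assoc, characteristicFlow_pow_mul_deriv hn hv hR hP,
    norm_lagrangianAmplitude_sq A₀ hP.le hQ.le, mul_left_comm,
    div_mul_cancel₀ _ (mul_pos hP hQ).ne', mul_comm]

theorem stmt13_general {n : ℕ} (hn : n ≠ 0) (t : ℝ)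
    (hv : ∀ R > 0, DifferentiableAt ℝ v₀ R) (A₀ : ℝ → E) :
    (∀ R > 0, 0 < 1 + tangentialRate n v₀ R * t → 0 < 1 + radialRate n v₀ R * t →
      ‖lagrangianAmplitude n v₀ A₀ t R‖ ^ 2 * characteristicFlow n v₀ t R ^ (n - 1) *
        deriv (characteristicFlow n v₀ t) R = ‖A₀ R‖ ^ 2 * R ^ (n - 1)) ∧
    ((∀ R > 0, 0 < 1 + tangentialRate n v₀ R * t ∧ 0 < 1 + radialRate n v₀ R * t) →
      ∫ R in Set.Ioi 0, ‖lagrangianAmplitude n v₀ A₀ t R‖ ^ 2 *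
          characteristicFlow n v₀ t R ^ (n - 1) * deriv (characteristicFlow n v₀ t) R =
        ∫ R in Set.Ioi 0, ‖A₀ R‖ ^ 2 * R ^ (n - 1)) := by
  have pointwise (R : ℝ) (hR : 0 < R) :=
    norm_lagrangianAmplitude_sq_mul_characteristicFlow_pow_mul_deriv (t := t) hn (hv R hR) A₀ hR.ne'
  refine ⟨pointwise, fun hpos => setIntegral_congr_fun measurableSet_Ioi fun R hR => ?_⟩
  exact pointwise R hR (hpos R hR).1 (hpos R hR).2

end Amplitude

/-- Conservation of the `L²` norm in Lagrangian coordinates: for the amplitude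
`a(t,R) = A₀(R) (1 + F(R)t)^{-1/2} (1 + G(R)t)^{-1/2}` along the characteristic flow
`X(t,R) = R (1 + F(R)t)^{2/n}`, one has `|a|² X^{n-1} ∂_R X = |A₀|² R^{n-1}` pointwise,
hence `∫₀^∞ |a|² X^{n-1} ∂_R X dR = ∫₀^∞ |A₀|² R^{n-1} dR`. -/
theorem stmt13 (n : ℕ) (hn : 1 ≤ n) (t : ℝ) (ht : 0 ≤ t)
    (v₀ : ℝ → ℝ) (hv : ∀ R > (0:ℝ), DifferentiableAt ℝ v₀ R)
    (A₀ : ℝ → ℂ)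
    (F G X : ℝ → ℝ) (a : ℝ → ℂ)
    (hF : ∀ R, F R = (n : ℝ) * v₀ R / (2 * R))
    (hG : ∀ R, G R = deriv v₀ R + ((n : ℝ) - 2) * v₀ R / (2 * R))
    (hX : ∀ R, X R = R * (1 + F R * t) ^ ((2:ℝ) / n))
    (ha : ∀ R, a R = A₀ R *
      (((1 + F R * t) ^ (-(1:ℝ) / 2) * (1 + G R * t) ^ (-(1:ℝ) / 2) : ℝ) : ℂ)) :
    (∀ R > (0:ℝ), 0 < 1 + F R * t → 0 < 1 + G R * t →
      ‖a R‖ ^ 2 * X R ^ (n - 1) * deriv X R = ‖A₀ R‖ ^ 2 * R ^ (n - 1)) ∧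
    ((∀ R > (0:ℝ), 0 < 1 + F R * t ∧ 0 < 1 + G R * t) →
      ∫ R in Set.Ioi (0:ℝ), ‖a R‖ ^ 2 * X R ^ (n - 1) * deriv X R
        = ∫ R in Set.Ioi (0:ℝ), ‖A₀ R‖ ^ 2 * R ^ (n - 1)) := by
  obtain ⟨rfl, rfl⟩ : F = tangentialRate n v₀ ∧ G = radialRate n v₀ := ⟨funext hF, funext hG⟩
  obtain ⟨rfl, rfl⟩ : X = characteristicFlow n v₀ t ∧ a = lagrangianAmplitude n v₀ A₀ t :=
    ⟨funext hX, funext fun R => by rw [ha, mul_comm, ← Complex.real_smul, lagrangianAmplitude]⟩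
  exact stmt13_general (Nat.one_le_iff_ne_zero.mp hn) t hv A₀
end

section
/- Let k ≥ 1 be an integer, α > 0, and let f : (0,∞) → ℂ be k times continuously differentiable. Suppose f^{(j)}(r) → 0 as r → ∞ for every 0 ≤ j ≤ k−1, and that L := lim_{r→∞} r^{α+k} f^{(k)}(r) exists. Then for every 0 ≤ j ≤ k, the limit lim_{r→∞} r^{α+j} f^{(j)}(r) exists and equals (−1)^{k−j} · (Γ(α+j)/Γ(α+k)) · L, where Γ is the Gamma function. In particular, if L ≠ 0 then all these limits are nonzero. -/
open Filter

/-!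
If `r ^ (β + 1) • g' r → M` then `g + (r ^ (-β) / β) • M` has derivative `o(r ^ (-β - 1))` and tends
to zero. By the mean value inequality it is therefore `o(r ^ (-β))`, that is,
`r ^ β • g r → -β⁻¹ • M`. Descending from `j + 1` to `j` with `β = α + j` contributes the factor
`-(α + j)⁻¹`, and these factors telescope to the quotient of Gamma values.
-/

section

open Asymptotics Set Topology

theorem differentiableAt_iteratedDeriv_of_contDiffAt {𝕜 F : Type*} [NontriviallyNormedField 𝕜]
    [NormedAddCommGroup F] [NormedSpace 𝕜 F] {f : 𝕜 → F} {x : 𝕜} {n : WithTop ℕ∞} {j : ℕ}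
    (hf : ContDiffAt 𝕜 n f x) (hj : j < n) : DifferentiableAt 𝕜 (iteratedDeriv j f) x := by
  rw [← differentiableWithinAt_univ, ← iteratedDerivWithin_univ]
  exact hf.contDiffWithinAt.differentiableWithinAt_iteratedDerivWithin hj
    (by simp)

theorem neg_one_pow_mul_Gamma_div_eq_of_lt {α : ℝ} {j k : ℕ} (hjk : j < k) (hj : α + j ≠ 0) :
    (-1) ^ (k - j) * (Real.Gamma (α + j) / Real.Gamma (α + k)) =
      -(α + j)⁻¹ * ((-1) ^ (k - (j + 1)) *
        (Real.Gamma (α + (j + 1 : ℕ)) / Real.Gamma (α + k))) := by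
  rw [show k - j = k - (j + 1) + 1 by omega, pow_succ, Nat.cast_succ, ← add_assoc,
    Real.Gamma_add_one hj]
  field_simp

variable {E : Type*} [NormedAddCommGroup E] [NormedSpace ℝ E]

theorem norm_le_of_norm_deriv_le_neg_deriv {f f' : ℝ → E} {φ φ' : ℝ → ℝ} {a : ℝ}
    (hf : ∀ x ∈ Ici a, HasDerivAt f (f' x) x) (hφ : ∀ x ∈ Ici a, HasDerivAt φ (φ' x) x)
    (hle : ∀ x ∈ Ici a, ‖f' x‖ ≤ -φ' x) (hf0 : Tendsto f atTop (𝓝 0))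
    (hφ0 : Tendsto φ atTop (𝓝 0)) : ‖f a‖ ≤ φ a := by
  have norm_sub_le : ∀ b ∈ Ici a, ‖f b - f a‖ ≤ φ a - φ b := fun b hb =>
    image_norm_le_of_norm_deriv_right_le_deriv_boundary' (f := fun x => f x - f a)
      (B := fun x => φ a - φ x)
      (fun x hx => ((hf x hx.1).sub_const _).continuousAt.continuousWithinAt)
      (fun x hx => ((hf x hx.1).sub_const _).hasDerivWithinAt) (by simp)
      (fun x hx => ((hφ x hx.1).const_sub _).continuousAt.continuousWithinAt)
      (fun x hx => ((hφ x hx.1).const_sub _).hasDerivWithinAt)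
      (fun x hx => hle x hx.1) (right_mem_Icc.2 hb)
  simpa using le_of_tendsto_of_tendsto (hf0.sub_const (f a)).norm (hφ0.const_sub (φ a))
    (eventually_atTop.2 ⟨a, norm_sub_le⟩)

theorem isLittleO_atTop_of_deriv_isLittleO {f f' : ℝ → E} {φ φ' : ℝ → ℝ}
    (hf : ∀ᶠ x in atTop, HasDerivAt f (f' x) x) (hφ : ∀ᶠ x in atTop, HasDerivAt φ (φ' x) x)
    (hφ' : ∀ᶠ x in atTop, φ' x ≤ 0) (hf0 : Tendsto f atTop (𝓝 0))
    (hφ0 : Tendsto φ atTop (𝓝 0)) (h : f' =o[atTop] φ') : f =o[atTop] φ := by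
  refine isLittleO_iff.2 fun c hc => ?_
  obtain ⟨a, ha⟩ := eventually_atTop.1 (hf.and (hφ.and (hφ'.and (isLittleO_iff.1 h hc))))
  filter_upwards [eventually_ge_atTop a] with x hx
  have norm_le : ‖f x‖ ≤ c * φ x := by
    refine norm_le_of_norm_deriv_le_neg_deriv (fun y hy => (ha y (hx.trans hy)).1)
      (fun y hy => (ha y (hx.trans hy)).2.1.const_mul c) (fun y hy => ?_) hf0
      (by simpa using hφ0.const_mul c)
    obtain ⟨-, -, hy_nonpos, hy_le⟩ := ha y (hx.trans hy)
    rwa [Real.norm_of_nonpos hy_nonpos, mul_neg] at hy_le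
  exact norm_le.trans (by gcongr; exact Real.le_norm_self _)

theorem tendsto_rpow_smul_atTop_iff_isLittleO {g : ℝ → E} {b : ℝ} {M : E} :
    Tendsto (fun r : ℝ => r ^ b • g r) atTop (𝓝 M) ↔
      (fun r : ℝ => g r - r ^ (-b) • M) =o[atTop] fun r : ℝ => r ^ (-b) := by
  have rpow_neg_ne_zero : ∀ᶠ r : ℝ in atTop, r ^ (-b) ≠ 0 :=
    (eventually_gt_atTop 0).mono fun r hr => (Real.rpow_pos_of_pos hr _).ne'
  rw [← tendsto_sub_nhds_zero_iff, ← isLittleOTVS_iff_isLittleO (𝕜 := ℝ),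
    isLittleOTVS_iff_tendsto_inv_smul (rpow_neg_ne_zero.mono fun _ hr h => absurd h hr)]
  refine tendsto_congr' ?_
  filter_upwards [rpow_neg_ne_zero, eventually_ge_atTop 0] with r hr hr0
  rw [smul_sub, inv_smul_smul₀ hr, ← Real.rpow_neg hr0, neg_neg]

theorem tendsto_rpow_smul_of_tendsto_rpow_add_one_smul_deriv {g g' : ℝ → E} {β : ℝ} {M : E}
    (hβ : 0 < β) (hg : ∀ᶠ r in atTop, HasDerivAt g (g' r) r) (hg0 : Tendsto g atTop (𝓝 0))
    (hM : Tendsto (fun r : ℝ => r ^ (β + 1) • g' r) atTop (𝓝 M)) :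
    Tendsto (fun r : ℝ => r ^ β • g r) atTop (𝓝 (-β⁻¹ • M)) := by
  have hasDerivAt_rpow : ∀ᶠ r : ℝ in atTop,
      HasDerivAt (fun r : ℝ => r ^ (-β)) (-β * r ^ (-(β + 1))) r := by
    filter_upwards [eventually_gt_atTop 0] with r hr
    rw [neg_add]
    exact Real.hasDerivAt_rpow_const (Or.inl hr.ne')
  rw [tendsto_rpow_smul_atTop_iff_isLittleO] at hM ⊢
  refine isLittleO_atTop_of_deriv_isLittleO (f' := fun r => g' r - r ^ (-(β + 1)) • M) ?_
    hasDerivAt_rpow ?_ ?_ (tendsto_rpow_neg_atTop hβ) (hM.const_mul_right (neg_ne_zero.2 hβ.ne'))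
  · filter_upwards [hg, hasDerivAt_rpow] with r hgr hr
    have smul_smul_eq : (-β * r ^ (-(β + 1))) • -β⁻¹ • M = r ^ (-(β + 1)) • M := by
      rw [smul_smul]
      congr 1
      field_simp
    exact smul_smul_eq ▸ hgr.sub (hr.smul_const (-β⁻¹ • M))
  · filter_upwards [eventually_gt_atTop 0] with r hr
    exact mul_nonpos_of_nonpos_of_nonneg (neg_nonpos.2 hβ.le) (Real.rpow_nonneg hr.le _)
  · simpa using hg0.sub ((tendsto_rpow_neg_atTop hβ).smul_const (-β⁻¹ • M))

theorem stmt15_general {k j : ℕ} {α : ℝ} {f : ℝ → E} {L : E} (hjk : j ≤ k) (hj : 0 < α + j)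
    (hf : ∀ᶠ r in atTop, ContDiffAt ℝ k f r)
    (hdecay : ∀ i < k, Tendsto (iteratedDeriv i f) atTop (𝓝 0))
    (hL : Tendsto (fun r : ℝ => r ^ (α + k) • iteratedDeriv k f r) atTop (𝓝 L)) :
    Tendsto (fun r : ℝ => r ^ (α + j) • iteratedDeriv j f r) atTop
        (𝓝 (((-1) ^ (k - j) * (Real.Gamma (α + j) / Real.Gamma (α + k))) • L)) ∧
      (L ≠ 0 → ((-1) ^ (k - j) * (Real.Gamma (α + j) / Real.Gamma (α + k))) • L ≠ 0) := by
  constructor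
  · induction hjk using Nat.decreasingInduction with
    | self => simpa [(Real.Gamma_pos_of_pos hj).ne'] using hL
    | of_succ i hik ih =>
      have hasDerivAt_iteratedDeriv : ∀ᶠ r in atTop,
          HasDerivAt (iteratedDeriv i f) (iteratedDeriv (i + 1) f r) r := by
        filter_upwards [hf] with r hr
        rw [iteratedDeriv_succ]
        exact (differentiableAt_iteratedDeriv_of_contDiffAt hr (by exact_mod_cast hik)).hasDerivAt
      rw [neg_one_pow_mul_Gamma_div_eq_of_lt hik hj.ne', mul_smul]
      exact tendsto_rpow_smul_of_tendsto_rpow_add_one_smul_deriv hj hasDerivAt_iteratedDeriv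
        (hdecay i hik)
        (by simpa only [Nat.cast_succ, add_assoc] using ih (by push_cast; linarith))
  · have Gamma_ne_zero : ∀ i ≥ j, Real.Gamma (α + i) ≠ 0 := fun i hi =>
      (Real.Gamma_pos_of_pos (hj.trans_le (by gcongr))).ne'
    exact smul_ne_zero (mul_ne_zero (by simp)
      (div_ne_zero (Gamma_ne_zero j le_rfl) (Gamma_ne_zero k hjk)))

end

/-- Iterated l'Hôpital-type lemma: if `f^{(j)}(r) → 0` as `r → ∞` for `0 ≤ j ≤ k-1` and
`r^{α+k} f^{(k)}(r) → L`, then for every `0 ≤ j ≤ k`,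
`r^{α+j} f^{(j)}(r) → (-1)^{k-j} (Γ(α+j)/Γ(α+k)) L`, which is nonzero whenever `L ≠ 0`. -/
theorem stmt15 (k : ℕ) (hk : 1 ≤ k) (α : ℝ) (hα : 0 < α)
    (f : ℝ → ℂ) (hf : ContDiffOn ℝ (k : ℕ∞) f (Set.Ioi 0))
    (hdecay : ∀ j ≤ k - 1, Tendsto (iteratedDeriv j f) atTop (nhds 0))
    (L : ℂ)
    (hL : Tendsto (fun r : ℝ => ((r ^ (α + (k : ℝ)) : ℝ) : ℂ) * iteratedDeriv k f r)
      atTop (nhds L)) :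
    ∀ j ≤ k,
      Tendsto (fun r : ℝ => ((r ^ (α + (j : ℝ)) : ℝ) : ℂ) * iteratedDeriv j f r) atTop
        (nhds ((-1) ^ (k - j) *
          ((Real.Gamma (α + (j : ℝ)) / Real.Gamma (α + (k : ℝ)) : ℝ) : ℂ) * L)) ∧
      (L ≠ 0 → (-1) ^ (k - j) *
          ((Real.Gamma (α + (j : ℝ)) / Real.Gamma (α + (k : ℝ)) : ℝ) : ℂ) * L ≠ 0) := by
  intro j hj
  have hf_atTop : ∀ᶠ r in atTop, ContDiffAt ℝ k f r :=
    (eventually_gt_atTop 0).mono fun r hr => hf.contDiffAt (Ioi_mem_nhds hr)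
  simpa [Complex.real_smul] using stmt15_general hj (by positivity) hf_atTop
    (fun i hi => hdecay i (Nat.le_sub_one_of_lt hi)) (by simpa [Complex.real_smul] using hL)
end

section
/- Let n ≥ 3, μ > 0, κ > 0, and let k ≥ 0 be an integer. Let A₀ ∈ C^k((0,∞); ℂ) be such that m₀(r) := ∫₀^r |A₀(s)|² s^{n−1} ds is finite for all r > 0, limsup_{r→0} |A₀^{(j)}(r)| / r^{κ−j} < ∞ for every 0 ≤ j ≤ k, and liminf_{r→0} |A₀(r)| / r^{κ} > 0. Define v₀(r) := √(2μ m₀(r)/((n−2) r^{n−2})). Then there exist ε > 0 and constants 0 < c ≤ C such that v₀ is (k+1)-times differentiable on (0,ε), c r^{κ+1} ≤ v₀(r) ≤ C r^{κ+1} for all r ∈ (0,ε), and for every 1 ≤ j ≤ k+1 one has limsup_{r→0} |v₀^{(j)}(r)| / r^{κ+1−j} < ∞. -/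
open MeasureTheory Set Filter

/-!
Call `f` a symbol of order `a` at `0⁺` if `f⁽ʲ⁾(r) = O(r ^ (a - j))` for all `j` up to the available
regularity, and elliptic if also `|f(r)| ≥ c r ^ a` with `c > 0`. Elliptic symbols are stable under
products and real powers (when nonnegative), and integration from `0` gains one order and one
derivative. With `A₀` elliptic of order `κ`, the density `|A₀|² r ^ (n - 1)` is elliptic of order
`2κ + n - 1`, so `m₀` has order `2κ + n`, the quotient `m₀ / r ^ (n - 2)` has order `2κ + 2`, and
its square root `v₀` has order `κ + 1`. Integrability of `|A₀|² r ^ (n - 1)` at `0`, combined with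
the lower bound on `A₀`, forces `2κ + n > 0`, so that the integral of `r ^ (2κ + n - 1)` from `0` is
a multiple of `r ^ (2κ + n)`.
-/

section

open Asymptotics
open scoped Topology

variable {E : Type*} [NormedAddCommGroup E] {N : ℕ} {a b : ℝ} {f : ℝ → E}

lemma eventually_rpow_pos_nhdsGT_zero (a : ℝ) : ∀ᶠ r in 𝓝[>] (0 : ℝ), 0 < r ^ a :=
  eventually_mem_nhdsWithin.mono fun _ hr ↦ Real.rpow_pos_of_pos hr a

lemma rpow_mul_rpow_eventuallyEq (a b : ℝ) :
    (fun r : ℝ ↦ r ^ a * r ^ b) =ᶠ[𝓝[>] 0] fun r ↦ r ^ (a + b) :=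
  eventually_mem_nhdsWithin.mono fun _ hr ↦ (Real.rpow_add hr a b).symm

lemma isBigO_rpow_nhdsGT_zero_iff :
    f =O[𝓝[>] 0] (fun r : ℝ ↦ r ^ a) ↔ ∃ C : ℝ, ∀ᶠ r in 𝓝[>] 0, ‖f r‖ ≤ C * r ^ a := by
  rw [isBigO_iff]
  refine exists_congr fun C ↦ eventually_congr ?_
  filter_upwards [eventually_rpow_pos_nhdsGT_zero a] with r hr
  rw [Real.norm_of_nonneg hr.le]

lemma rpow_isBigO_nhdsGT_zero_iff :
    (fun r : ℝ ↦ r ^ a) =O[𝓝[>] 0] f ↔ ∃ c > 0, ∀ᶠ r in 𝓝[>] 0, c * r ^ a ≤ ‖f r‖ := by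
  rw [isBigO_iff'']
  refine exists_congr fun c ↦ and_congr_right fun _ ↦ eventually_congr ?_
  filter_upwards [eventually_rpow_pos_nhdsGT_zero a] with r hr
  rw [Real.norm_of_nonneg hr.le]

lemma rpow_isTheta_rpow_mul {f : ℝ → ℝ} (hf₀ : 0 ≤ᶠ[𝓝[>] 0] f)
    (hf : f =Θ[𝓝[>] 0] fun r : ℝ ↦ r ^ a) (p : ℝ) :
    (fun r ↦ f r ^ p) =Θ[𝓝[>] 0] fun r : ℝ ↦ r ^ (a * p) := by
  have ha₀ : 0 ≤ᶠ[𝓝[>] 0] fun r : ℝ ↦ r ^ a :=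
    (eventually_rpow_pos_nhdsGT_zero a).mono fun _ hr ↦ hr.le
  exact (hf.rpow hf₀ ha₀).trans_eventuallyEq <|
    eventually_mem_nhdsWithin.mono fun _ hr ↦ (Real.rpow_mul (le_of_lt hr) a p).symm

lemma integral_const_mul_rpow (ha : -1 < a) (c r : ℝ) :
    ∫ s in (0 : ℝ)..r, c * s ^ a = c / (a + 1) * r ^ (a + 1) := by
  rw [intervalIntegral.integral_const_mul, integral_rpow (.inl ha), Real.zero_rpow (by linarith)]
  ring

lemma rpow_isBigO_integral {f : ℝ → ℝ} (ha : -1 < a) (hf₀ : 0 ≤ᶠ[𝓝[>] 0] f)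
    (hint : ∀ᶠ r in 𝓝[>] 0, IntervalIntegrable f volume 0 r)
    (hf : (fun r : ℝ ↦ r ^ a) =O[𝓝[>] 0] f) :
    (fun r : ℝ ↦ r ^ (a + 1)) =O[𝓝[>] 0] fun r ↦ ∫ s in (0 : ℝ)..r, f s := by
  obtain ⟨c, hc, hlow⟩ := rpow_isBigO_nhdsGT_zero_iff.1 hf
  obtain ⟨ε, hε, hbound⟩ := mem_nhdsGT_iff_exists_Ioo_subset.1 (hf₀.and hlow)
  refine rpow_isBigO_nhdsGT_zero_iff.2 ⟨c / (a + 1), div_pos hc (by linarith), ?_⟩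
  filter_upwards [hint, Ioo_mem_nhdsGT hε] with r hintr hr
  rw [← integral_const_mul_rpow ha]
  refine (intervalIntegral.integral_mono_on_of_le_Ioo hr.1.le
    ((intervalIntegral.intervalIntegrable_rpow' ha).const_mul c) hintr fun s hs ↦ ?_).trans
    (le_abs_self _)
  obtain ⟨hs₀, hslow⟩ := hbound ⟨hs.1, hs.2.trans hr.2⟩
  exact hslow.trans_eq (Real.norm_of_nonneg hs₀)

lemma neg_one_lt_of_rpow_isBigO (hint : ∀ᶠ r in 𝓝[>] 0, IntervalIntegrable f volume 0 r)
    (hf : (fun r : ℝ ↦ r ^ a) =O[𝓝[>] 0] f) : -1 < a := by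
  obtain ⟨r, hr, hr₀ : 0 < r⟩ := (hint.and eventually_mem_nhdsWithin).exists
  have hmeas : StronglyMeasurableAtFilter (fun s : ℝ ↦ s ^ a) (𝓝[>] 0) volume :=
    ⟨univ, univ_mem, by fun_prop⟩
  obtain ⟨t, ht, htint⟩ := hf.integrableAtFilter hmeas
    ⟨Ioc 0 r, Ioc_mem_nhdsGT hr₀, (intervalIntegrable_iff_integrableOn_Ioc_of_le hr₀.le).1 hr⟩
  obtain ⟨ε, hε, hsub⟩ := mem_nhdsGT_iff_exists_Ioo_subset.1 ht
  exact (intervalIntegral.integrableOn_Ioo_rpow_iff hε).1 (htint.mono_set hsub)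

variable {F G : Type*} [NormedSpace ℝ E] [NormedAddCommGroup F] [NormedSpace ℝ F]
  [NormedAddCommGroup G] [NormedSpace ℝ G]

lemma integral_isBigO_rpow (ha : -1 < a) (hf : f =O[𝓝[>] 0] fun r : ℝ ↦ r ^ a) :
    (fun r ↦ ∫ s in (0 : ℝ)..r, f s) =O[𝓝[>] 0] fun r : ℝ ↦ r ^ (a + 1) := by
  obtain ⟨C, hC⟩ := isBigO_rpow_nhdsGT_zero_iff.1 hf
  obtain ⟨ε, hε, hbound⟩ := mem_nhdsGT_iff_exists_Ioo_subset.1 hC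
  refine isBigO_rpow_nhdsGT_zero_iff.2 ⟨C / (a + 1), ?_⟩
  filter_upwards [Ioo_mem_nhdsGT hε] with r hr
  rw [← integral_const_mul_rpow ha]
  refine intervalIntegral.norm_integral_le_of_norm_le hr.1.le (.of_forall fun s hs ↦ ?_)
    ((intervalIntegral.intervalIntegrable_rpow' ha).const_mul C)
  exact hbound ⟨hs.1, hs.2.trans_lt hr.2⟩

lemma bilin_isBigO_rpow (B : E →L[ℝ] F →L[ℝ] G) {g : ℝ → F} (hf : f =O[𝓝[>] 0] fun r : ℝ ↦ r ^ a)
    (hg : g =O[𝓝[>] 0] fun r : ℝ ↦ r ^ b) :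
    (fun r ↦ B (f r) (g r)) =O[𝓝[>] 0] fun r : ℝ ↦ r ^ (a + b) := by
  have hB : (fun r ↦ B (f r) (g r)) =O[𝓝[>] 0] fun r ↦ ‖f r‖ * ‖g r‖ :=
    .of_bound ‖B‖ <| .of_forall fun r ↦ by simpa [mul_assoc] using B.le_opNorm₂ (f r) (g r)
  exact hB.trans <| (hf.norm_left.mul hg.norm_left).trans_eventuallyEq
    (rpow_mul_rpow_eventuallyEq a b)

lemma eventually_contDiffAt_succ_iff {s : Set ℝ} (hs : IsOpen s) {x : ℝ} :
    (∀ᶠ r in 𝓝[s] x, ContDiffAt ℝ (N + 1) f r) ↔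
      (∀ᶠ r in 𝓝[s] x, DifferentiableAt ℝ f r) ∧ ∀ᶠ r in 𝓝[s] x, ContDiffAt ℝ N (deriv f) r := by
  refine ⟨fun h ↦ ⟨h.mono fun r hr ↦ hr.differentiableAt (by simp),
    h.mono fun r hr ↦ hr.derivWithin le_rfl⟩, fun ⟨hd, hc⟩ ↦ ?_⟩
  filter_upwards [(eventually_nhdsWithin_eventually_nhds_iff_of_isOpen hs).2 hd, hc] with r hdr hcr
  exact contDiffAt_succ_iff_hasFDerivAt.2 ⟨fun y ↦ .toSpanSingleton ℝ (deriv f y),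
    ⟨_, hdr, fun y hy ↦ hy.hasDerivAt.hasFDerivAt⟩,
    (ContinuousLinearMap.toSpanSingletonCLE (𝕜 := ℝ) (E := E)).contDiff.contDiffAt.comp r hcr⟩

/-- `f` obeys symbol estimates of order `a` at `0⁺` up to `N` derivatives: it is `C^N` on some
`(0, ε)`, and `f⁽ʲ⁾(r) = O(r ^ (a - j))` as `r → 0⁺` for every `j ≤ N`. -/
structure IsSymbolAtZero (N : ℕ) (a : ℝ) (f : ℝ → E) : Prop where
  contDiffAt : ∀ᶠ r in 𝓝[>] 0, ContDiffAt ℝ N f r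
  iteratedDeriv_isBigO : ∀ j ≤ N, iteratedDeriv j f =O[𝓝[>] 0] fun r ↦ r ^ (a - j)

namespace IsSymbolAtZero

lemma isBigO (hf : IsSymbolAtZero N a f) : f =O[𝓝[>] 0] fun r ↦ r ^ a := by
  simpa using hf.iteratedDeriv_isBigO 0 N.zero_le

lemma of_le {M : ℕ} (hf : IsSymbolAtZero N a f) (hMN : M ≤ N) : IsSymbolAtZero M a f where
  contDiffAt := hf.contDiffAt.mono fun _ hr ↦ hr.of_le (mod_cast hMN)
  iteratedDeriv_isBigO j hj := hf.iteratedDeriv_isBigO j (hj.trans hMN)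

lemma congr {g : ℝ → E} (hf : IsSymbolAtZero N a f) (hfg : f =ᶠ[𝓝[>] 0] g) :
    IsSymbolAtZero N a g := by
  have hloc : ∀ᶠ r in 𝓝[>] (0 : ℝ), f =ᶠ[𝓝 r] g :=
    (eventually_nhdsWithin_eventually_nhds_iff_of_isOpen isOpen_Ioi).2 hfg
  refine ⟨?_, fun j hj ↦ (hf.iteratedDeriv_isBigO j hj).congr' ?_ .rfl⟩
  · filter_upwards [hf.contDiffAt, hloc] with r hr hfgr using hr.congr_of_eventuallyEq hfgr.symm
  · exact hloc.mono fun r hfgr ↦ hfgr.iteratedDeriv_eq j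

lemma zero_iff : IsSymbolAtZero 0 a f ↔
    (∀ᶠ r in 𝓝[>] 0, ContDiffAt ℝ 0 f r) ∧ f =O[𝓝[>] 0] fun r ↦ r ^ a := by
  refine ⟨fun hf ↦ ⟨mod_cast hf.contDiffAt, hf.isBigO⟩, fun ⟨hc, hO⟩ ↦ ⟨mod_cast hc, ?_⟩⟩
  intro j hj
  obtain rfl : j = 0 := Nat.le_zero.1 hj
  simpa using hO

lemma succ_iff : IsSymbolAtZero (N + 1) a f ↔
    (∀ᶠ r in 𝓝[>] 0, DifferentiableAt ℝ f r) ∧ f =O[𝓝[>] 0] (fun r ↦ r ^ a) ∧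
      IsSymbolAtZero N (a - 1) (deriv f) := by
  have hexp (j : ℕ) : a - 1 - j = a - (j + 1 : ℕ) := by push_cast; ring
  constructor
  · intro hf
    obtain ⟨hd, hc⟩ := (eventually_contDiffAt_succ_iff isOpen_Ioi).1 (mod_cast hf.contDiffAt)
    refine ⟨hd, hf.isBigO, hc, fun j hj ↦ ?_⟩
    rw [hexp, ← iteratedDeriv_succ']
    exact hf.iteratedDeriv_isBigO (j + 1) (by lia)
  · rintro ⟨hd, hO, hf'⟩
    refine ⟨mod_cast (eventually_contDiffAt_succ_iff isOpen_Ioi).2 ⟨hd, hf'.contDiffAt⟩, ?_⟩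
    rintro (_ | j) hj
    · simpa using hO
    · rw [iteratedDeriv_succ', ← hexp]
      exact hf'.iteratedDeriv_isBigO j (by lia)

lemma eventually_differentiableAt_iteratedDeriv (hf : IsSymbolAtZero N a f) :
    ∀ᶠ r in 𝓝[>] 0, ∀ j < N, DifferentiableAt ℝ (iteratedDeriv j f) r := by
  filter_upwards [hf.contDiffAt] with r hr j hj
  rw [← differentiableWithinAt_univ, ← iteratedDerivWithin_univ]
  exact hr.contDiffWithinAt.differentiableWithinAt_iteratedDerivWithin (mod_cast hj)
    (by simp [uniqueDiffOn_univ])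

lemma add {g : ℝ → E} (hf : IsSymbolAtZero N a f) (hg : IsSymbolAtZero N a g) :
    IsSymbolAtZero N a (fun r ↦ f r + g r) where
  contDiffAt := by
    filter_upwards [hf.contDiffAt, hg.contDiffAt] with r hfr hgr using hfr.add hgr
  iteratedDeriv_isBigO j hj := by
    refine ((hf.iteratedDeriv_isBigO j hj).add (hg.iteratedDeriv_isBigO j hj)).congr' ?_ .rfl
    filter_upwards [(hf.of_le hj).contDiffAt, (hg.of_le hj).contDiffAt] with r hfr hgr
    exact (iteratedDeriv_fun_add hfr hgr).symm

lemma bilin (B : E →L[ℝ] F →L[ℝ] G) {g : ℝ → F} (hf : IsSymbolAtZero N a f)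
    (hg : IsSymbolAtZero N b g) : IsSymbolAtZero N (a + b) (fun r ↦ B (f r) (g r)) := by
  induction N generalizing a b f g with
  | zero =>
    refine zero_iff.2 ⟨?_, bilin_isBigO_rpow B hf.isBigO hg.isBigO⟩
    filter_upwards [(zero_iff.1 hf).1, (zero_iff.1 hg).1] with r hfr hgr
    exact B.isBoundedBilinearMap.contDiff.contDiffAt.comp r (hfr.prodMk hgr)
  | succ N ih =>
    obtain ⟨hfd, hfO, hf'⟩ := succ_iff.1 hf
    obtain ⟨hgd, hgO, hg'⟩ := succ_iff.1 hg
    have hderiv : ∀ᶠ r in 𝓝[>] 0, HasDerivAt (fun r ↦ B (f r) (g r))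
        (B (f r) (deriv g r) + B (deriv f r) (g r)) r := by
      filter_upwards [hfd, hgd] with r hfr hgr
      exact B.hasDerivAt_of_bilinear (fun _ ↦ hfr.hasDerivAt) fun _ ↦ hgr.hasDerivAt
    have hfg' : IsSymbolAtZero N (a + b - 1) fun r ↦ B (f r) (deriv g r) := by
      simpa only [add_sub_assoc] using ih (hf.of_le N.le_succ) hg'
    have hf'g : IsSymbolAtZero N (a + b - 1) fun r ↦ B (deriv f r) (g r) := by
      simpa only [sub_add_eq_add_sub] using ih hf' (hg.of_le N.le_succ)
    exact succ_iff.2 ⟨hderiv.mono fun r hr ↦ hr.differentiableAt, bilin_isBigO_rpow B hfO hgO,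
      (hfg'.add hf'g).congr (hderiv.mono fun r hr ↦ hr.deriv.symm)⟩

lemma mul {f g : ℝ → ℝ} (hf : IsSymbolAtZero N a f) (hg : IsSymbolAtZero N b g) :
    IsSymbolAtZero N (a + b) (fun r ↦ f r * g r) :=
  hf.bilin (.mul ℝ ℝ) hg

lemma const_mul {f : ℝ → ℝ} (c : ℝ) (hf : IsSymbolAtZero N a f) :
    IsSymbolAtZero N a (fun r ↦ c * f r) where
  contDiffAt := hf.contDiffAt.mono fun _ hr ↦ contDiffAt_const.mul hr
  iteratedDeriv_isBigO j hj :=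
    ((hf.iteratedDeriv_isBigO j hj).const_mul_left c).congr_left fun _ ↦
      (iteratedDeriv_const_mul_field c f).symm

lemma rpow_const (N : ℕ) (p : ℝ) : IsSymbolAtZero N p (fun r ↦ r ^ p) where
  contDiffAt := eventually_mem_nhdsWithin.mono fun _ hr ↦ Real.contDiffAt_rpow_const_of_ne hr.ne'
  iteratedDeriv_isBigO j _ := by
    rw [iteratedDeriv_eq_iterate, funext fun r ↦ Real.iter_deriv_rpow_const p r j]
    exact (isBigO_refl _ _).const_mul_left _

end IsSymbolAtZero

/-- `f` is a symbol of order `a` at `0⁺` that is moreover bounded below by a positive multiple of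
`r ^ a`. As for pseudodifferential symbols, this is what makes `f ^ p` a symbol of order `a * p`
for every real `p`. -/
structure IsEllipticAtZero (N : ℕ) (a : ℝ) (f : ℝ → E) : Prop extends IsSymbolAtZero N a f where
  rpow_isBigO : (fun r ↦ r ^ a) =O[𝓝[>] 0] f

namespace IsEllipticAtZero

lemma isTheta (hf : IsEllipticAtZero N a f) : f =Θ[𝓝[>] 0] fun r ↦ r ^ a :=
  ⟨hf.isBigO, hf.rpow_isBigO⟩

lemma eventually_ne_zero (hf : IsEllipticAtZero N a f) : ∀ᶠ r in 𝓝[>] 0, f r ≠ 0 := by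
  filter_upwards [hf.isTheta.eq_zero_iff, eventually_rpow_pos_nhdsGT_zero a] with r hr hpos
  exact mt hr.1 hpos.ne'

lemma mul {f g : ℝ → ℝ} (hf : IsEllipticAtZero N a f) (hg : IsEllipticAtZero N b g) :
    IsEllipticAtZero N (a + b) (fun r ↦ f r * g r) where
  toIsSymbolAtZero := hf.toIsSymbolAtZero.mul hg.toIsSymbolAtZero
  rpow_isBigO := (rpow_mul_rpow_eventuallyEq a b).symm.trans_isBigO
    (hf.rpow_isBigO.mul hg.rpow_isBigO)

lemma const_mul {f : ℝ → ℝ} {c : ℝ} (hc : c ≠ 0) (hf : IsEllipticAtZero N a f) :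
    IsEllipticAtZero N a (fun r ↦ c * f r) where
  toIsSymbolAtZero := hf.toIsSymbolAtZero.const_mul c
  rpow_isBigO := hf.rpow_isBigO.const_mul_right hc

lemma pow_const (N d : ℕ) : IsEllipticAtZero N d (fun r : ℝ ↦ r ^ d) := by
  simpa only [Real.rpow_natCast] using
    (⟨.rpow_const N d, isBigO_refl _ _⟩ : IsEllipticAtZero N (d : ℝ) fun r ↦ r ^ (d : ℝ))

lemma norm_sq {H : Type*} [NormedAddCommGroup H] [InnerProductSpace ℝ H] {f : ℝ → H}
    (hf : IsEllipticAtZero N a f) : IsEllipticAtZero N (a + a) (fun r ↦ ‖f r‖ ^ 2) where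
  toIsSymbolAtZero := (hf.toIsSymbolAtZero.bilin (innerSL ℝ) hf.toIsSymbolAtZero).congr <|
    .of_forall fun r ↦ real_inner_self_eq_norm_sq (f r)
  rpow_isBigO := by
    simpa only [sq] using (rpow_mul_rpow_eventuallyEq a a).symm.trans_isBigO
      (hf.rpow_isBigO.norm_right.mul hf.rpow_isBigO.norm_right)

lemma rpow {f : ℝ → ℝ} (hf : IsEllipticAtZero N a f) (hf₀ : 0 ≤ᶠ[𝓝[>] 0] f) (p : ℝ) :
    IsEllipticAtZero N (a * p) (fun r ↦ f r ^ p) := by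
  refine ⟨?_, (rpow_isTheta_rpow_mul hf₀ hf.isTheta p).2⟩
  have hΘ := hf.isTheta
  have hne := hf.eventually_ne_zero
  replace hf := hf.toIsSymbolAtZero
  induction N generalizing p with
  | zero =>
    refine IsSymbolAtZero.zero_iff.2 ⟨?_, (rpow_isTheta_rpow_mul hf₀ hΘ p).1⟩
    filter_upwards [(IsSymbolAtZero.zero_iff.1 hf).1, hne] with r hr hr₀
    exact hr.rpow_const_of_ne hr₀
  | succ N ih =>
    obtain ⟨hd, -, hf'⟩ := IsSymbolAtZero.succ_iff.1 hf
    have hderiv : ∀ᶠ r in 𝓝[>] 0,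
        HasDerivAt (fun r ↦ f r ^ p) (p * (deriv f r * f r ^ (p - 1))) r := by
      filter_upwards [hd, hne] with r hr hr₀
      convert hr.hasDerivAt.rpow_const (.inl hr₀) using 1
      ring
    have hsymb := (hf'.mul (ih (p - 1) (hf.of_le N.le_succ))).const_mul p
    rw [show a - 1 + a * (p - 1) = a * p - 1 by ring] at hsymb
    exact IsSymbolAtZero.succ_iff.2 ⟨hderiv.mono fun r hr ↦ hr.differentiableAt,
      (rpow_isTheta_rpow_mul hf₀ hΘ p).1, hsymb.congr (hderiv.mono fun r hr ↦ hr.deriv.symm)⟩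

lemma sqrt {f : ℝ → ℝ} (hf : IsEllipticAtZero N a f) (hf₀ : 0 ≤ᶠ[𝓝[>] 0] f) :
    IsEllipticAtZero N (a / 2) (fun r ↦ √(f r)) := by
  simpa only [Real.sqrt_eq_rpow, mul_one_div] using hf.rpow hf₀ (1 / 2)

lemma div_pow {f : ℝ → ℝ} (hf : IsEllipticAtZero N a f) (d : ℕ) :
    IsEllipticAtZero N (a - d) (fun r ↦ f r / r ^ d) := by
  have hpow : 0 ≤ᶠ[𝓝[>] 0] fun r : ℝ ↦ r ^ d :=
    eventually_mem_nhdsWithin.mono fun r hr ↦ pow_nonneg (le_of_lt hr) d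
  simpa only [Real.rpow_neg_one, mul_neg_one, ← sub_eq_add_neg, ← div_eq_mul_inv] using
    hf.mul ((pow_const N d).rpow hpow (-1))

end IsEllipticAtZero

lemma IsSymbolAtZero.integral [CompleteSpace E] (ha : -1 < a) (hf : IsSymbolAtZero N a f)
    (hint : ∀ᶠ r in 𝓝[>] 0, IntervalIntegrable f volume 0 r) :
    IsSymbolAtZero (N + 1) (a + 1) (fun r ↦ ∫ s in (0 : ℝ)..r, f s) := by
  have hderiv : ∀ᶠ r in 𝓝[>] 0, HasDerivAt (fun r ↦ ∫ s in (0 : ℝ)..r, f s) (f r) r := by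
    have hcont : ∀ᶠ r in 𝓝[>] 0, ContinuousAt f r := hf.contDiffAt.mono fun _ hr ↦ hr.continuousAt
    filter_upwards [hint, (eventually_nhdsWithin_eventually_nhds_iff_of_isOpen isOpen_Ioi).2 hcont]
      with r hr hcontr
    obtain ⟨u, hu, hur, hru⟩ := eventually_nhds_iff.1 hcontr
    exact intervalIntegral.integral_hasDerivAt_right hr
      (ContinuousAt.stronglyMeasurableAtFilter hur hu r hru) hcontr.self_of_nhds
  refine succ_iff.2 ⟨hderiv.mono fun r hr ↦ hr.differentiableAt,
    integral_isBigO_rpow ha hf.isBigO, ?_⟩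
  rw [add_sub_cancel_right]
  exact hf.congr (hderiv.mono fun r hr ↦ hr.deriv.symm)

lemma IsEllipticAtZero.integral {f : ℝ → ℝ} (hf : IsEllipticAtZero N a f)
    (hf₀ : 0 ≤ᶠ[𝓝[>] 0] f) (hint : ∀ᶠ r in 𝓝[>] 0, IntervalIntegrable f volume 0 r) :
    IsEllipticAtZero (N + 1) (a + 1) (fun r ↦ ∫ s in (0 : ℝ)..r, f s) :=
  have ha : -1 < a := neg_one_lt_of_rpow_isBigO hint hf.rpow_isBigO
  ⟨hf.toIsSymbolAtZero.integral ha hint, rpow_isBigO_integral ha hf₀ hint hf.rpow_isBigO⟩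

lemma isEllipticAtZero_iff :
    IsEllipticAtZero N a f ↔ (∀ᶠ r in 𝓝[>] 0, ContDiffAt ℝ N f r) ∧
      (∀ j ≤ N, ∃ C : ℝ, ∀ᶠ r in 𝓝[>] 0, ‖iteratedDeriv j f r‖ ≤ C * r ^ (a - j)) ∧
      ∃ c > 0, ∀ᶠ r in 𝓝[>] 0, c * r ^ a ≤ ‖f r‖ := by
  simp only [← isBigO_rpow_nhdsGT_zero_iff, ← rpow_isBigO_nhdsGT_zero_iff]
  exact ⟨fun h ↦ ⟨h.contDiffAt, h.iteratedDeriv_isBigO, h.rpow_isBigO⟩,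
    fun ⟨h, h', h''⟩ ↦ ⟨⟨h, h'⟩, h''⟩⟩

lemma IsEllipticAtZero.exists_forall_Ioo {f : ℝ → ℝ} (hf : IsEllipticAtZero N a f)
    (hf₀ : ∀ r, 0 ≤ f r) :
    ∃ ε > 0, ∃ c C : ℝ, 0 < c ∧ c ≤ C ∧
      (∀ r ∈ Ioo 0 ε, ∀ j < N, DifferentiableAt ℝ (iteratedDeriv j f) r) ∧
      ∀ r ∈ Ioo 0 ε, c * r ^ a ≤ f r ∧ f r ≤ C * r ^ a := by
  obtain ⟨c, hc, hlow⟩ := rpow_isBigO_nhdsGT_zero_iff.1 hf.rpow_isBigO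
  obtain ⟨C, hup⟩ := isBigO_rpow_nhdsGT_zero_iff.1 hf.isBigO
  obtain ⟨ε, hε, hsub⟩ := mem_nhdsGT_iff_exists_Ioo_subset.1
    (hf.eventually_differentiableAt_iteratedDeriv.and (hlow.and hup))
  simp only [Real.norm_of_nonneg (hf₀ _)] at hsub
  refine ⟨ε, hε, c, max c C, hc, le_max_left c C, fun r hr ↦ (hsub hr).1,
    fun r hr ↦ ⟨(hsub hr).2.1, (hsub hr).2.2.trans ?_⟩⟩
  gcongr
  exacts [Real.rpow_nonneg hr.1.le a, le_max_right c C]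

theorem isEllipticAtZero_initialVelocity {H : Type*} [NormedAddCommGroup H] [InnerProductSpace ℝ H]
    {n : ℕ} (hn : 3 ≤ n) {μ κ : ℝ} (hμ : 0 < μ) {A : ℝ → H} (hA : IsEllipticAtZero N κ A)
    (hint : ∀ r > 0, IntervalIntegrable (fun s ↦ ‖A s‖ ^ 2 * s ^ (n - 1)) volume 0 r) :
    IsEllipticAtZero (N + 1) (κ + 1) fun r ↦
      √(2 * μ * (∫ s in (0 : ℝ)..r, ‖A s‖ ^ 2 * s ^ (n - 1)) / ((n - 2) * r ^ (n - 2))) := by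
  have hn₂ : (0 : ℝ) < n - 2 := by
    have : (3 : ℝ) ≤ n := mod_cast hn
    linarith
  have hdensity₀ {s : ℝ} (hs : 0 ≤ s) : 0 ≤ ‖A s‖ ^ 2 * s ^ (n - 1) := by positivity
  have hmass : IsEllipticAtZero (N + 1) (κ + κ + (n - 1 : ℕ) + 1)
      fun r ↦ ∫ s in (0 : ℝ)..r, ‖A s‖ ^ 2 * s ^ (n - 1) :=
    (hA.norm_sq.mul (.pow_const N (n - 1))).integral
      (eventually_mem_nhdsWithin.mono fun _ hr ↦ hdensity₀ (le_of_lt hr))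
      (eventually_mem_nhdsWithin.mono hint)
  have hsq := (hmass.div_pow (n - 2)).const_mul (div_pos (mul_pos two_pos hμ) hn₂).ne'
  simp only [← mul_div_mul_comm] at hsq
  have hsq₀ : ∀ᶠ r in 𝓝[>] (0 : ℝ), 0 ≤
      2 * μ * (∫ s in (0 : ℝ)..r, ‖A s‖ ^ 2 * s ^ (n - 1)) / ((n - 2) * r ^ (n - 2)) := by
    filter_upwards [eventually_mem_nhdsWithin] with r hr
    have : 0 ≤ ∫ s in (0 : ℝ)..r, ‖A s‖ ^ 2 * s ^ (n - 1) :=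
      intervalIntegral.integral_nonneg (le_of_lt hr) fun s hs ↦ hdensity₀ hs.1
    have : 0 ≤ r ^ (n - 2) := pow_nonneg (le_of_lt hr) _
    positivity
  convert hsq.sqrt hsq₀ using 1
  push_cast [show 1 ≤ n by lia, show 2 ≤ n by lia]
  ring

theorem stmt18_general {H : Type*} [NormedAddCommGroup H] [InnerProductSpace ℝ H]
    (n : ℕ) (hn : 3 ≤ n) (μ : ℝ) (hμ : 0 < μ) (κ : ℝ)
    (k : ℕ) (A₀ : ℝ → H) (hA : ContDiffOn ℝ k A₀ (Ioi 0))
    (hint : ∀ r > 0, IntervalIntegrable (fun s ↦ ‖A₀ s‖ ^ 2 * s ^ (n - 1)) volume 0 r)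
    (hup : ∀ j ≤ k, ∃ C : ℝ, ∀ᶠ r in 𝓝[>] 0, ‖iteratedDeriv j A₀ r‖ ≤ C * r ^ (κ - j))
    (hlow : ∃ c > 0, ∀ᶠ r in 𝓝[>] 0, c * r ^ κ ≤ ‖A₀ r‖)
    (m₀ v₀ : ℝ → ℝ)
    (hm : ∀ r, m₀ r = ∫ s in (0 : ℝ)..r, ‖A₀ s‖ ^ 2 * s ^ (n - 1))
    (hv : ∀ r, v₀ r = √(2 * μ * m₀ r / ((n - 2) * r ^ (n - 2)))) :
    ∃ ε > 0, ∃ c C : ℝ, 0 < c ∧ c ≤ C ∧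
      (∀ r ∈ Ioo 0 ε, ∀ j ≤ k, DifferentiableAt ℝ (iteratedDeriv j v₀) r) ∧
      (∀ r ∈ Ioo 0 ε, c * r ^ (κ + 1) ≤ v₀ r ∧ v₀ r ≤ C * r ^ (κ + 1)) ∧
      (∀ j : ℕ, 1 ≤ j → j ≤ k + 1 → ∃ C' : ℝ, ∀ᶠ r in 𝓝[>] 0,
        |iteratedDeriv j v₀ r| ≤ C' * r ^ (κ + 1 - j)) := by
  have hA_contDiffAt : ∀ᶠ r in 𝓝[>] 0, ContDiffAt ℝ k A₀ r :=
    eventually_mem_nhdsWithin.mono fun r hr ↦ hA.contDiffAt (Ioi_mem_nhds hr)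
  have hv_elliptic : IsEllipticAtZero (k + 1) (κ + 1) v₀ := by
    simpa only [funext hv, hm] using isEllipticAtZero_initialVelocity hn hμ
      (isEllipticAtZero_iff.2 ⟨hA_contDiffAt, hup, hlow⟩) hint
  obtain ⟨ε, hε, c, C, hc, hcC, hdiff, hbounds⟩ :=
    hv_elliptic.exists_forall_Ioo fun r ↦ hv r ▸ Real.sqrt_nonneg _
  exact ⟨ε, hε, c, C, hc, hcC, fun r hr j hj ↦ hdiff r hr j (Nat.lt_succ_of_le hj), hbounds,
    fun j _ hj ↦ (isEllipticAtZero_iff.1 hv_elliptic).2.1 j hj⟩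

end

/-- Vanishing rates near the origin: if `A₀` is `C^k` on `(0,∞)` with
`|A₀^{(j)}(r)| ≲ r^{κ-j}` and `|A₀(r)| ≳ r^κ` as `r → 0`, then the special initial velocity
`v₀(r) = √(2μ m₀(r)/((n-2) r^{n-2}))` is `(k+1)`-times differentiable near `0`, is comparable
to `r^{κ+1}` there, and satisfies `|v₀^{(j)}(r)| ≲ r^{κ+1-j}` for `1 ≤ j ≤ k+1`. -/
theorem stmt18 (n : ℕ) (hn : 3 ≤ n) (μ : ℝ) (hμ : 0 < μ) (κ : ℝ) (hκ : 0 < κ)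
    (k : ℕ) (A₀ : ℝ → ℂ) (hA : ContDiffOn ℝ (k : ℕ∞) A₀ (Set.Ioi 0))
    (hint : ∀ r > (0:ℝ), IntervalIntegrable (fun s => ‖A₀ s‖ ^ 2 * s ^ (n - 1)) volume 0 r)
    (hup : ∀ j ≤ k, ∃ C : ℝ, ∀ᶠ r in nhdsWithin 0 (Set.Ioi 0),
        ‖iteratedDeriv j A₀ r‖ ≤ C * r ^ (κ - (j : ℝ)))
    (hlow : ∃ c > (0:ℝ), ∀ᶠ r in nhdsWithin 0 (Set.Ioi 0), c * r ^ κ ≤ ‖A₀ r‖)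
    (m₀ v₀ : ℝ → ℝ)
    (hm : ∀ r, m₀ r = ∫ s in (0:ℝ)..r, ‖A₀ s‖ ^ 2 * s ^ (n - 1))
    (hv : ∀ r, v₀ r = Real.sqrt (2 * μ * m₀ r / (((n : ℝ) - 2) * r ^ (n - 2)))) :
    ∃ ε > (0:ℝ), ∃ c C : ℝ, 0 < c ∧ c ≤ C ∧
      (∀ r ∈ Set.Ioo (0:ℝ) ε, ∀ j ≤ k, DifferentiableAt ℝ (iteratedDeriv j v₀) r) ∧
      (∀ r ∈ Set.Ioo (0:ℝ) ε, c * r ^ (κ + 1) ≤ v₀ r ∧ v₀ r ≤ C * r ^ (κ + 1)) ∧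
      (∀ j : ℕ, 1 ≤ j → j ≤ k + 1 → ∃ C' : ℝ, ∀ᶠ r in nhdsWithin 0 (Set.Ioi 0),
        |iteratedDeriv j v₀ r| ≤ C' * r ^ (κ + 1 - (j : ℝ))) := by
  exact stmt18_general n hn μ hμ κ k A₀ hA hint hup hlow m₀ v₀ hm hv
end

section
/- Let n ≥ 3 and μ > 0. Let A₀ : [0,∞) → ℂ be continuous, not identically zero, with ∫₀^∞ |A₀(s)|² s^{n−1} ds < ∞. Define m₀(r) := ∫₀^r |A₀(s)|² s^{n−1} ds, v₀(r) := √(2μ m₀(r)/((n−2) r^{n−2})) for r > 0, and Φ₀(r) := ∫₀^r v₀(s) ds. Then Φ₀ is bounded on [0,∞) if and only if n ≥ 5. -/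
open MeasureTheory Set

/-!
A nonnegative, locally integrable `v₀` has a bounded primitive on `[0, ∞)` iff it is integrable
there. Near the origin, `s ^ (n - 1) ≤ r ^ (n - 2) * s` for `s ≤ r` gives
`m₀ r / r ^ (n - 2) ≤ ∫₀^r |A₀ s|² s ds → 0`, so `v₀` is continuous up to `0` and only its decay at
infinity matters. There `m₀` tends to the positive total mass, so `v₀` is equivalent to a constant
times `r ^ (1 - n / 2)`, which is integrable at infinity iff `n > 4`.
-/

section

open Filter Asymptotics Topology

theorem exists_abs_intervalIntegral_le_iff_integrableOn_Ioi {v : ℝ → ℝ} {a : ℝ}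
    (hv : LocallyIntegrableOn v (Ici a)) (hv0 : ∀ r, a < r → 0 ≤ v r) :
    (∃ C : ℝ, ∀ r ≥ a, |∫ s in a..r, v s| ≤ C) ↔ IntegrableOn v (Ioi a) := by
  constructor
  · rintro ⟨C, hC⟩
    refine integrableOn_Ioi_of_intervalIntegral_norm_bounded C a (b := id) (l := atTop)
      (fun r => ?_) tendsto_id ?_
    · exact (hv.integrableOn_compact_subset Icc_subset_Ici_self isCompact_Icc).mono_set
        Ioc_subset_Icc_self
    · filter_upwards [eventually_ge_atTop a] with r hr
      have norm_eq : ∫ s in a..r, ‖v s‖ = ∫ s in a..r, v s := by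
        refine intervalIntegral.integral_congr_ae (ae_of_all _ fun s hs => ?_)
        rw [uIoc_of_le hr] at hs
        exact Real.norm_of_nonneg (hv0 s hs.1)
      exact norm_eq.trans_le ((le_abs_self _).trans (hC r hr))
  · intro hint
    refine ⟨∫ s in Ioi a, ‖v s‖, fun r hr => ?_⟩
    rw [intervalIntegral.integral_of_le hr]
    calc ‖∫ s in Ioc a r, v s‖ ≤ ∫ s in Ioc a r, ‖v s‖ := norm_integral_le_integral_norm _
      _ ≤ ∫ s in Ioi a, ‖v s‖ :=
        setIntegral_mono_set hint.norm (ae_of_all _ fun _ => norm_nonneg _)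
          Ioc_subset_Ioi_self.eventuallyLE

theorem isEquivalent_sqrt_div_rpow {m : ℝ → ℝ} {M p : ℝ} (hm : Tendsto m atTop (𝓝 M))
    (hM : 0 < M) :
    (fun r => √(m r / r ^ p)) ~[atTop] fun r => √M * r ^ (-p / 2) := by
  have sqrt_mass : (fun r => √(m r)) ~[atTop] fun _ => √M :=
    (isEquivalent_const_iff_tendsto (Real.sqrt_pos.2 hM).ne').2 hm.sqrt
  refine (sqrt_mass.mul IsEquivalent.refl).congr_left ?_
  filter_upwards [eventually_gt_atTop 0] with r hr
  rw [Pi.mul_apply, Real.sqrt_div' _ (Real.rpow_nonneg hr.le p), Real.sqrt_eq_rpow (r ^ p),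
    ← Real.rpow_mul hr.le, div_eq_mul_inv (√(m r)), ← Real.rpow_neg hr.le]
  ring_nf

theorem abs_integral_mul_rpow_le {g : ℝ → ℝ} {p r : ℝ} (hp : 0 ≤ p) (hr : 0 ≤ r)
    (hg : IntervalIntegrable g volume 0 r) :
    |∫ s in (0 : ℝ)..r, g s * s ^ p| ≤ (∫ s in (0 : ℝ)..r, |g s|) * r ^ p := by
  rw [← intervalIntegral.integral_mul_const]
  refine intervalIntegral.norm_integral_le_of_norm_le (E := ℝ) hr (ae_of_all _ fun s hs => ?_)
    (hg.abs.mul_const _)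
  rw [norm_mul, Real.norm_of_nonneg (Real.rpow_nonneg hs.1.le p), Real.norm_eq_abs]
  gcongr
  exacts [hs.1.le, hs.2]

theorem continuousOn_Ici_primitive {E : Type*} [NormedAddCommGroup E] [NormedSpace ℝ E]
    {f : ℝ → E} {a : ℝ} (hf : LocallyIntegrableOn f (Ici a)) :
    ContinuousOn (fun r => ∫ s in a..r, f s) (Ici a) := by
  intro r hr
  have hr' : a ≤ r + 1 := le_add_of_le_of_nonneg hr zero_le_one
  have on_Icc : ContinuousOn (fun r => ∫ s in a..r, f s) (Icc a (r + 1)) := by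
    rw [← uIcc_of_le hr']
    refine intervalIntegral.continuousOn_primitive_interval ?_
    rw [uIcc_of_le hr']
    exact hf.integrableOn_compact_subset Icc_subset_Ici_self isCompact_Icc
  refine (on_Icc r ⟨hr, (lt_add_one r).le⟩).mono_of_mem_nhdsWithin ?_
  rw [← Ici_inter_Iic]
  exact inter_mem_nhdsWithin _ (Iic_mem_nhds (lt_add_one r))

/-- The speed `v(r) = √(m(r) / r ^ p)` generated by the mass `m(r) = ∫₀^r g(s) s ^ p ds`. For the
initial phase in dimension `n` one has `p = n - 2` and `g(s) = (2 μ / (n - 2)) |A₀(s)|² s`, so that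
`g` absorbs the physical constant and one of the `n - 1` powers of `s`. -/
noncomputable def radialSpeed (g : ℝ → ℝ) (p r : ℝ) : ℝ :=
  √((∫ s in (0 : ℝ)..r, g s * s ^ p) / r ^ p)

namespace radialSpeed

variable {g : ℝ → ℝ} {p : ℝ}

theorem continuousOn_Ici (hp : 0 ≤ p) (hg : LocallyIntegrableOn g (Ici 0)) :
    ContinuousOn (radialSpeed g p) (Ici 0) := by
  refine ContinuousOn.sqrt fun r hr => ?_
  rcases eq_or_lt_of_le (show (0 : ℝ) ≤ r from hr) with rfl | hr0
  · have abs_primitive_tendsto :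
        Tendsto (fun r => ∫ s in (0 : ℝ)..r, |g s|) (𝓝[≥] 0) (𝓝 0) := by
      simpa [ContinuousWithinAt] using continuousOn_Ici_primitive hg.norm 0 self_mem_Ici
    simp only [ContinuousWithinAt, intervalIntegral.integral_same, zero_div]
    refine squeeze_zero_norm' ?_ abs_primitive_tendsto
    filter_upwards [self_mem_nhdsWithin] with r (hr : 0 ≤ r)
    have hgr : IntervalIntegrable g volume 0 r :=
      (intervalIntegrable_iff_integrableOn_Icc_of_le hr).2
        (hg.integrableOn_compact_subset Icc_subset_Ici_self isCompact_Icc)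
    rw [norm_div, Real.norm_of_nonneg (Real.rpow_nonneg hr p)]
    exact div_le_of_le_mul₀ (Real.rpow_nonneg hr p)
      (intervalIntegral.integral_nonneg hr fun _ _ => abs_nonneg _)
      (abs_integral_mul_rpow_le hp hr hgr)
  · have mass_density_locallyIntegrableOn :
        LocallyIntegrableOn (fun s => g s * s ^ p) (Ici 0) :=
      hg.mul_continuousOn (Real.continuous_rpow_const hp).continuousOn isLocallyClosed_Ici
    exact (continuousOn_Ici_primitive mass_density_locallyIntegrableOn r hr).div
      (Real.continuous_rpow_const hp).continuousWithinAt (Real.rpow_pos_of_pos hr0 p).ne'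

theorem isTheta_rpow (hint : IntegrableOn (fun s => g s * s ^ p) (Ioi 0))
    (hpos : 0 < ∫ s in Ioi (0 : ℝ), g s * s ^ p) :
    radialSpeed g p =Θ[atTop] fun r => r ^ (-p / 2) :=
  (isEquivalent_sqrt_div_rpow (intervalIntegral_tendsto_integral_Ioi 0 hint tendsto_id)
    hpos).isTheta.trans ((isTheta_refl _ _).const_mul_left (Real.sqrt_pos.2 hpos).ne')

theorem integrableOn_Ioi_iff (hp : 0 ≤ p) (hg : LocallyIntegrableOn g (Ici 0))
    (hint : IntegrableOn (fun s => g s * s ^ p) (Ioi 0))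
    (hpos : 0 < ∫ s in Ioi (0 : ℝ), g s * s ^ p) :
    IntegrableOn (radialSpeed g p) (Ioi 0) ↔ 2 < p := by
  have hcont := continuousOn_Ici hp hg
  have speed_measurable : StronglyMeasurableAtFilter (radialSpeed g p) atTop :=
    ⟨Ici 0, Ici_mem_atTop 0, hcont.aestronglyMeasurable measurableSet_Ici⟩
  have rpow_measurable : StronglyMeasurableAtFilter (fun r : ℝ => r ^ (-p / 2)) atTop :=
    (by fun_prop : Measurable fun r : ℝ => r ^ (-p / 2)).stronglyMeasurable
      |>.stronglyMeasurableAtFilter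
  have hΘ := isTheta_rpow hint hpos
  calc IntegrableOn (radialSpeed g p) (Ioi 0)
      ↔ IntegrableAtFilter (radialSpeed g p) atTop := by
        rw [← integrableOn_Ici_iff_integrableOn_Ioi, integrableOn_Ici_iff_integrableAtFilter_atTop,
          and_iff_left (hcont.locallyIntegrableOn measurableSet_Ici)]
    _ ↔ IntegrableAtFilter (fun r : ℝ => r ^ (-p / 2)) atTop :=
        ⟨hΘ.2.integrableAtFilter rpow_measurable, hΘ.1.integrableAtFilter speed_measurable⟩
    _ ↔ -p / 2 < -1 := integrableAtFilter_rpow_atTop_iff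
    _ ↔ 2 < p := by constructor <;> intro h <;> linarith

theorem exists_abs_integral_le_iff (hp : 0 ≤ p) (hg : LocallyIntegrableOn g (Ici 0))
    (hint : IntegrableOn (fun s => g s * s ^ p) (Ioi 0))
    (hpos : 0 < ∫ s in Ioi (0 : ℝ), g s * s ^ p) :
    (∃ C : ℝ, ∀ r ≥ (0 : ℝ), |∫ s in (0 : ℝ)..r, radialSpeed g p s| ≤ C) ↔ 2 < p :=
  (exists_abs_intervalIntegral_le_iff_integrableOn_Ioi
    ((continuousOn_Ici hp hg).locallyIntegrableOn measurableSet_Ici)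
    fun _ _ => Real.sqrt_nonneg _).trans (integrableOn_Ioi_iff hp hg hint hpos)

end radialSpeed

variable {E : Type*} [NormedAddCommGroup E]

theorem not_ae_eq_zero_of_continuousOn_Ici {f : ℝ → E} {a : ℝ} (hf : ContinuousOn f (Ici a))
    (hne : ∃ r ≥ a, f r ≠ 0) : ¬ f =ᵐ[volume.restrict (Ioi a)] 0 := by
  intro h
  obtain ⟨r, hr, hfr⟩ := hne
  rw [restrict_Ioi_eq_restrict_Ici] at h
  exact hfr (Measure.eqOn_of_ae_eq h hf continuousOn_const (by simp) hr)

theorem integral_Ioi_norm_sq_mul_pow_pos {A : ℝ → E} {k : ℕ}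
    (hA : ¬ A =ᵐ[volume.restrict (Ioi 0)] 0)
    (hint : IntegrableOn (fun s => ‖A s‖ ^ 2 * s ^ k) (Ioi 0)) :
    0 < ∫ s in Ioi (0 : ℝ), ‖A s‖ ^ 2 * s ^ k := by
  have density_nonneg : ∀ s ∈ Ioi (0 : ℝ), 0 ≤ ‖A s‖ ^ 2 * s ^ k := fun s (hs : 0 < s) => by
    positivity
  refine (setIntegral_nonneg measurableSet_Ioi density_nonneg).lt_of_ne' fun h => hA ?_
  rw [setIntegral_eq_zero_iff_of_nonneg_ae
    (ae_restrict_of_forall_mem measurableSet_Ioi density_nonneg) hint] at h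
  filter_upwards [h, ae_restrict_mem measurableSet_Ioi] with s hs (hs0 : 0 < s)
  simpa [hs0.ne'] using hs

theorem stmt19_general (n : ℕ) (hn : 3 ≤ n) (μ : ℝ) (hμ : 0 < μ)
    (A₀ : ℝ → E) (hloc : LocallyIntegrableOn (fun s => ‖A₀ s‖ ^ 2 * s) (Ici 0))
    (hne : ¬ A₀ =ᵐ[volume.restrict (Ioi 0)] 0)
    (hint : IntegrableOn (fun s => ‖A₀ s‖ ^ 2 * s ^ (n - 1)) (Ioi 0))
    (m₀ v₀ Φ₀ : ℝ → ℝ)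
    (hm : ∀ r, m₀ r = ∫ s in (0 : ℝ)..r, ‖A₀ s‖ ^ 2 * s ^ (n - 1))
    (hv : ∀ r > (0 : ℝ), v₀ r = √(2 * μ * m₀ r / (((n : ℝ) - 2) * r ^ (n - 2))))
    (hΦ : ∀ r, Φ₀ r = ∫ s in (0 : ℝ)..r, v₀ s) :
    (∃ C : ℝ, ∀ r ≥ (0 : ℝ), |Φ₀ r| ≤ C) ↔ 5 ≤ n := by
  obtain ⟨k, rfl⟩ : ∃ k, n = k + 2 := ⟨n - 2, by omega⟩
  have hk : (0 : ℝ) < k := by exact_mod_cast (by omega : 0 < k)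
  set c : ℝ := 2 * μ / k
  have hc : 0 < c := by positivity
  set g : ℝ → ℝ := fun s => c * (‖A₀ s‖ ^ 2 * s)
  have density_eq :
      (fun s => g s * s ^ (k : ℝ)) = fun s => c * (‖A₀ s‖ ^ 2 * s ^ (k + 2 - 1)) :=
    funext fun s => by
      rw [Real.rpow_natCast, show k + 2 - 1 = k + 1 from rfl]
      ring
  have speed_eq : ∀ r > 0, v₀ r = radialSpeed g k r := fun r hr => by
    rw [hv r hr, radialSpeed, density_eq, intervalIntegral.integral_const_mul, ← hm,
      Real.rpow_natCast, Nat.cast_add, Nat.cast_ofNat, add_sub_cancel_right, Nat.add_sub_cancel,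
      mul_div_mul_comm, mul_div_assoc c]
  have phase_eq : ∀ r ≥ 0, Φ₀ r = ∫ s in (0 : ℝ)..r, radialSpeed g k s := fun r hr => by
    rw [hΦ]
    refine intervalIntegral.integral_congr_ae (ae_of_all _ fun s hs => ?_)
    rw [uIoc_of_le hr] at hs
    exact speed_eq s hs.1
  have total_mass_pos : 0 < ∫ s in Ioi (0 : ℝ), g s * s ^ (k : ℝ) := by
    rw [density_eq, integral_const_mul]
    exact mul_pos hc (integral_Ioi_norm_sq_mul_pow_pos hne hint)
  calc (∃ C : ℝ, ∀ r ≥ (0 : ℝ), |Φ₀ r| ≤ C)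
      ↔ ∃ C : ℝ, ∀ r ≥ (0 : ℝ), |∫ s in (0 : ℝ)..r, radialSpeed g k s| ≤ C :=
        exists_congr fun C => forall₂_congr fun r hr => by rw [phase_eq r hr]
    _ ↔ (2 : ℝ) < k := radialSpeed.exists_abs_integral_le_iff hk.le
        (hloc.continuousOn_mul continuousOn_const isLocallyClosed_Ici)
        (density_eq ▸ hint.const_mul c) total_mass_pos
    _ ↔ 5 ≤ k + 2 := by
        rw [← Nat.cast_ofNat, Nat.cast_lt]
        omega

end

/-- The special initial phase `Φ₀(r) = ∫₀^r √(2μ m₀(s)/((n-2) s^{n-2})) ds` of the WKB data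
for the focusing Schrödinger–Poisson system, built from a continuous, square-integrable
(with weight `s^{n-1}`), not identically vanishing amplitude `A₀`, is bounded on `[0,∞)`
if and only if `n ≥ 5`. -/
theorem stmt19 (n : ℕ) (hn : 3 ≤ n) (μ : ℝ) (hμ : 0 < μ)
    (A₀ : ℝ → ℂ) (hcont : ContinuousOn A₀ (Set.Ici 0))
    (hne : ∃ r ≥ (0:ℝ), A₀ r ≠ 0)
    (hint : IntegrableOn (fun s => ‖A₀ s‖ ^ 2 * s ^ (n - 1)) (Set.Ioi 0))
    (m₀ v₀ Φ₀ : ℝ → ℝ)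
    (hm : ∀ r, m₀ r = ∫ s in (0:ℝ)..r, ‖A₀ s‖ ^ 2 * s ^ (n - 1))
    (hv : ∀ r > (0:ℝ), v₀ r = Real.sqrt (2 * μ * m₀ r / (((n : ℝ) - 2) * r ^ (n - 2))))
    (hΦ : ∀ r, Φ₀ r = ∫ s in (0:ℝ)..r, v₀ s) :
    (∃ C : ℝ, ∀ r ≥ (0:ℝ), |Φ₀ r| ≤ C) ↔ 5 ≤ n := by
  have hloc : LocallyIntegrableOn (fun s => ‖A₀ s‖ ^ 2 * s) (Ici 0) :=
    ((hcont.norm.pow 2).mul continuousOn_id).locallyIntegrableOn measurableSet_Ici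
  exact stmt19_general n hn μ hμ A₀ hloc (not_ae_eq_zero_of_continuousOn_Ici hcont hne) hint
    m₀ v₀ Φ₀ hm hv hΦ
end
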